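/- For every α > 1 there exist δ₀ > 0, σ > 0 and μ > 0 such that for all δ ∈ (0, δ₀] and all h ∈ Z with ‖h − Φ_LSW * Φ_LSW‖_Z ≤ μ the following hold, where ε_app := 1/Ĝ₁[h; δ] and ε̃_app := Ĝ₂[h; δ]/Ĝ₁[h; δ]²: (i) every pair (ε, ε̃) with 0 < ε ≤ σ·√δ and 0 < ε̃ ≤ σ·√δ solving the compatibility equations ε = ε²·G₁[h; ε, ε̃, δ] and ε̃ = ε²·G₂[h; ε, ε̃, δ] satisfies ε_app/α ≤ ε ≤ α·ε_app and ε̃_app/α ≤ ε̃ ≤ α·ε̃_app; (ii) there exists exactly one such pair (ε, ε̃). -/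

import Mathlib

/-!
Write `D_δ = 1 / a_δ`. Since `b_δ = 1 + D_δ'`, the exponential weight in `Γ_i` integrates explicitly:
with `P_δ = ∫ 1 / D_δ` and `S_δ = ∫ y / D_δ`,
`a_δ(ξ) Γ_i(ξ; ε, ε̃) = F_i(ξ)
  := ∫₀^ξ γ_i(z) / D_δ(z) · exp ((1 - ε) (P_δ(ξ) - P_δ(z)) - ε̃ (S_δ(ξ) - S_δ(z))) dz`
(`aF_mul_Gam`). In the variable `x = z ^ (1/3)`, with `s = (1/2) ^ (1/3)`, one has
`D_δ = (x - s) ^ 2 (x + 2 s) + δ x`, so `D_δ` nearly has a double root at the critical volume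
`z = 1/2`, and `P_δ` grows there by an amount of order `δ ^ (-1/2)`.

Everything is measured in units of `A = exp P_δ(5/8)`, which exceeds any multiple of `δ ^ (-1/2)` as
`δ → 0`. For `ε = ε̃ = 0` the function `F_i` is at most `A` times a polynomial
(`FF_zero_le`) and at least a constant times `A` past `5/8` (`le_FF_zero`); as `Φ_LSW * Φ_LSW` is
bounded, bounded below on `[5/8, 3/4]` and zero beyond `1` (`conv_facts`), `Ĝ_i` is comparable
to `A`. Parameters `ε, ε̃ ≤ σ √δ` move the exponent by `O(σ)` times a linear function of `ξ`, and the
part of `G_i` over `(1, ∞)` is `O(μ A)`. Hence `G_i` agrees with `Ĝ_i` up to a small relative error,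
and it is Lipschitz in `(ε, ε̃)` with constant `O(A / √δ)` (`G_bounds`).

For positive `ε` and `G₁` the compatibility equations say `ε = 1 / G₁` and `ε̃ = G₂ / G₁ ^ 2`
(`compat_iff`). The relative error bound then gives (i) (`localization_bounds`). The right-hand side
maps the box `[0, σ √δ] ^ 2` into itself, because it is `O(1 / A)`, and contracts with rate
`O(1 / (A √δ))`, which is small; this gives (ii) (`fixed_point_system`).
-/

open MeasureTheory Set Filter

/-- λ_LSW := 3 (1/2)^(2/3) -/
noncomputable def lamLSW : ℝ := 3 * (1/2 : ℝ) ^ ((2:ℝ)/3)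

/-- a_δ(z) := 1/(1 + z − (λ_LSW − δ) z^(1/3)) -/
noncomputable def aF (δ z : ℝ) : ℝ := 1 / (1 + z - (lamLSW - δ) * z ^ ((1:ℝ)/3))

/-- b_δ(z) := 2 − (1/3)(λ_LSW − δ) z^(−2/3) -/
noncomputable def bF (δ z : ℝ) : ℝ := 2 - (1/3) * (lamLSW - δ) * z ^ (-(2:ℝ)/3)

/-- ‖Φ‖_sup := sup_{0≤z≤1} |Φ(z)| -/
noncomputable def normSup (Φ : ℝ → ℝ) : ℝ := sSup ((fun z => |Φ z|) '' Icc (0:ℝ) 1)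

/-- ‖Φ‖_tail := sup_{z≥1} |Φ(z)| e^{β₁ z} z^{β₂} -/
noncomputable def normTail (β₁ β₂ : ℝ) (Φ : ℝ → ℝ) : ℝ :=
  sSup ((fun z => |Φ z| * Real.exp (β₁ * z) * z ^ β₂) '' Ici (1:ℝ))

/-- ‖Φ‖_Z := ‖Φ‖_sup + ‖Φ‖_tail -/
noncomputable def normZ (β₁ β₂ : ℝ) (Φ : ℝ → ℝ) : ℝ := normSup Φ + normTail β₁ β₂ Φ

/-- membership in the space Z: measurable with finite norm -/
def memZ (β₁ β₂ : ℝ) (Φ : ℝ → ℝ) : Prop :=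
  Measurable Φ ∧ BddAbove ((fun z => |Φ z|) '' Icc (0:ℝ) 1) ∧
    BddAbove ((fun z => |Φ z| * Real.exp (β₁ * z) * z ^ β₂) '' Ici (1:ℝ))

/-- (Φ₁ * Φ₂)(z) := (1/2) ∫₀^z Φ₁(z−y) Φ₂(y) dy -/
noncomputable def conv (Φ₁ Φ₂ : ℝ → ℝ) (z : ℝ) : ℝ :=
  (1/2) * ∫ y in (0:ℝ)..z, Φ₁ (z - y) * Φ₂ y

/-- unnormalized solution of the homogeneous ODE -/
noncomputable def psi0 (δ ε εt z : ℝ) : ℝ :=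
  Real.exp (-∫ y in (0:ℝ)..z, aF δ y * (bF δ y - εt * y - ε))

/-- ψ(z; ε, ε̃, δ), normalized so that ∫₀¹ z ψ dz = 1 -/
noncomputable def psi (δ ε εt z : ℝ) : ℝ :=
  psi0 δ ε εt z / ∫ t in (0:ℝ)..1, t * psi0 δ ε εt t

/-- the smooth LSW self-similar profile -/
noncomputable def PhiLSW (z : ℝ) : ℝ :=
  if z ≤ 1/2 then
    Real.exp (-∫ y in (0:ℝ)..z, aF 0 y * bF 0 y) /
      ∫ t in (0:ℝ)..(1/2 : ℝ), t * Real.exp (-∫ y in (0:ℝ)..t, aF 0 y * bF 0 y)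
  else 0

/-- ρ_δ(ξ) := ξ a_δ(ξ) exp(−∫_ξ^1 a_δ b_δ) -/
noncomputable def rhoF (δ ξ : ℝ) : ℝ :=
  ξ * aF δ ξ * Real.exp (-∫ y in ξ..(1:ℝ), aF δ y * bF δ y)

/-- R_δ[h] := ∫₀¹ ρ_δ(ξ) h(ξ) dξ -/
noncomputable def Rdel (δ : ℝ) (h : ℝ → ℝ) : ℝ := ∫ ξ in (0:ℝ)..1, rhoF δ ξ * h ξ

/-- R₀[h] := ∫_{1/2}^1 ξ a₀(ξ) h(ξ) exp(−∫_ξ^1 a₀ b₀) dξ -/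
noncomputable def Rzero (h : ℝ → ℝ) : ℝ :=
  ∫ ξ in (1/2 : ℝ)..1, ξ * aF 0 ξ * h ξ * Real.exp (-∫ y in ξ..(1:ℝ), aF 0 y * bF 0 y)

/-- γ₁(z) = z, γ₂(z) = 1 -/
noncomputable def gamF (i : ℕ) (z : ℝ) : ℝ := if i = 1 then z else 1

/-- Γ_i(ξ; ε, ε̃, δ) -/
noncomputable def Gam (i : ℕ) (δ ε εt ξ : ℝ) : ℝ :=
  ∫ z in (0:ℝ)..ξ, gamF i z * Real.exp (∫ y in z..ξ, aF δ y * (bF δ y - εt * y - ε))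

/-- Γ̂_i(ξ; δ) := Γ_i(ξ; 0, 0, δ) -/
noncomputable def GamHat (i : ℕ) (δ ξ : ℝ) : ℝ := Gam i δ 0 0 ξ

/-- K_i^δ := Γ̂_i(1; δ) -/
noncomputable def Kc (i : ℕ) (δ : ℝ) : ℝ := GamHat i δ 1

/-- Ĝ_i[h; δ] := ∫₀¹ ξ a_δ(ξ) h(ξ) Γ̂_i(ξ; δ) dξ -/
noncomputable def Ghat (i : ℕ) (δ : ℝ) (h : ℝ → ℝ) : ℝ :=
  ∫ ξ in (0:ℝ)..1, ξ * aF δ ξ * h ξ * GamHat i δ ξ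

/-- G_i[h; ε, ε̃, δ] := ∫₀^∞ ξ a_δ(ξ) h(ξ) Γ_i(ξ; ε, ε̃, δ) dξ -/
noncomputable def Gfull (i : ℕ) (δ ε εt : ℝ) (h : ℝ → ℝ) : ℝ :=
  ∫ ξ in Ioi (0:ℝ), ξ * aF δ ξ * h ξ * Gam i δ ε εt ξ

/-! ### The denominator of the kernel and its primitives -/

/-- The cube root `s` of the critical volume `1/2`, so that `λ_LSW = 3 s ^ 2`. -/
noncomputable def sC : ℝ := (1/2 : ℝ) ^ ((1:ℝ)/3)

lemma sC_pos : 0 < sC := by unfold sC; positivity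

lemma sC_cube : sC ^ 3 = 1/2 := by
  unfold sC
  rw [← Real.rpow_natCast, ← Real.rpow_mul (by norm_num)]
  norm_num

lemma lam_eq : lamLSW = 3 * sC ^ 2 := by
  unfold lamLSW sC
  rw [← Real.rpow_natCast ((1/2:ℝ) ^ ((1:ℝ)/3)), ← Real.rpow_mul (by norm_num)]
  norm_num

lemma sC_lt : sC < 4/5 := by
  by_contra! h
  have := pow_le_pow_left₀ (by norm_num) h 3
  rw [sC_cube] at this; norm_num at this

lemma lt_sC : 3/4 < sC := by
  by_contra! h
  have := pow_le_pow_left₀ sC_pos.le h 3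
  rw [sC_cube] at this; norm_num at this

/-- The denominator `1 + z - (λ_LSW - δ) z ^ (1/3)` of `a_δ`, reflected to an even function so
that it is continuous, and positive for `δ > 0`, on the whole line. -/
noncomputable def DD (δ z : ℝ) : ℝ := 1 + |z| - (lamLSW - δ) * |z| ^ ((1:ℝ)/3)

lemma aF_eq {δ z : ℝ} (hz : 0 ≤ z) : aF δ z = 1 / DD δ z := by
  unfold aF DD; rw [abs_of_nonneg hz]

lemma cbrt_cube {z : ℝ} (hz : 0 ≤ z) : (z ^ ((1:ℝ)/3)) ^ 3 = z := by
  rw [← Real.rpow_natCast, ← Real.rpow_mul hz]; norm_num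

/-- The double root of the critical denominator: in the variable `x = z ^ (1/3)` it is
`(x - s) ^ 2 (x + 2 s)`, and `δ` adds `δ x`. -/
lemma DD_factor (δ : ℝ) {x z : ℝ} (hx : x = |z| ^ ((1:ℝ)/3)) :
    DD δ z = (x - sC) ^ 2 * (x + 2 * sC) + δ * x := by
  have h1 : x ^ 3 = |z| := by rw [hx]; exact cbrt_cube (abs_nonneg z)
  unfold DD
  rw [← hx, lam_eq, ← h1]
  linear_combination (-2) * sC_cube

lemma exists_cbrt (δ : ℝ) {z : ℝ} (hz : 0 ≤ z) :
    ∃ x, 0 ≤ x ∧ x ^ 3 = z ∧ DD δ z = (x - sC) ^ 2 * (x + 2 * sC) + δ * x := by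
  refine ⟨|z| ^ ((1:ℝ)/3), by positivity, ?_, DD_factor δ rfl⟩
  rw [abs_of_nonneg hz]; exact cbrt_cube hz

lemma DD_pos {δ : ℝ} (hδ : 0 < δ) (z : ℝ) : 0 < DD δ z := by
  have h := DD_factor δ (z := z) rfl
  set x := |z| ^ ((1:ℝ)/3)
  have hx : 0 ≤ x := by positivity
  have hs := sC_pos
  rw [h]
  rcases hx.eq_or_lt with h0 | h0
  · rw [← h0]
    have : (0 - sC) ^ 2 * (0 + 2 * sC) + δ * 0 = 2 * sC ^ 3 := by ring
    rw [this]; positivity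
  · positivity

lemma DD_cont (δ : ℝ) : Continuous (DD δ) := by
  unfold DD
  have : Continuous fun z : ℝ => |z| ^ ((1:ℝ)/3) :=
    continuous_abs.rpow_const (fun _ => Or.inr (by norm_num))
  fun_prop

/-- On `[0, 1]` the denominator dominates `(z - 1/2) ^ 2 + δ`. -/
lemma DD_lower {δ z : ℝ} (hδ : 0 ≤ δ) (hδ1 : δ ≤ 1) (hz : 0 ≤ z) (hz1 : z ≤ 1) :
    ((z - 1/2) ^ 2 + δ) / 20 ≤ DD δ z := by
  obtain ⟨x, hx, hxz, hD⟩ := exists_cbrt δ hz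
  have hx1 : x ≤ 1 := by
    by_contra! h
    have := one_lt_pow₀ h (n := 3) (by norm_num)
    linarith
  have hs := lt_sC
  have hs' := sC_lt
  have e : z - 1/2 = (x - sC) * (x ^ 2 + x * sC + sC ^ 2) := by
    rw [← hxz]; linear_combination sC_cube
  have hq : (z - 1/2) ^ 2 ≤ 9 * (x - sC) ^ 2 := by
    rw [e, mul_pow]
    have h1 : 0 ≤ x ^ 2 + x * sC + sC ^ 2 := by positivity
    have h2 : x ^ 2 + x * sC + sC ^ 2 ≤ 3 := by nlinarith
    have h3 : (x ^ 2 + x * sC + sC ^ 2) ^ 2 ≤ 9 := by nlinarith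
    nlinarith [sq_nonneg (x - sC)]
  have hm : (x - sC) ^ 2 ≤ (x - sC) ^ 2 * (x + 2 * sC) := by
    nlinarith [sq_nonneg (x - sC)]
  rw [hD]
  by_cases h4 : x < 1/4
  · have : 1/4 ≤ (x - sC) ^ 2 := by nlinarith
    have : 0 ≤ δ * x := by positivity
    nlinarith
  · push Not at h4
    have : δ * (1/4) ≤ δ * x := mul_le_mul_of_nonneg_left h4 hδ
    nlinarith [sq_nonneg (x - sC)]

/-- For `z ≥ 1` the denominator grows linearly. -/
lemma DD_lower_far {δ z : ℝ} (hδ : 0 ≤ δ) (hz : 1 ≤ z) : z / 25 ≤ DD δ z := by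
  obtain ⟨x, hx, hxz, hD⟩ := exists_cbrt δ (by linarith : 0 ≤ z)
  have hx1 : 1 ≤ x := by
    by_contra! h
    have := pow_lt_one₀ hx h (n := 3) (by norm_num)
    linarith
  have hs := sC_pos
  have hs' := sC_lt
  have h1 : x / 5 ≤ x - sC := by linarith
  have h2 : (x / 5) ^ 2 ≤ (x - sC) ^ 2 := pow_le_pow_left₀ (by positivity) h1 2
  rw [hD]
  calc z / 25 = (x / 5) ^ 2 * x := by rw [← hxz]; ring
    _ ≤ (x - sC) ^ 2 * (x + 2 * sC) := by
        apply mul_le_mul h2 (by linarith) hx (by positivity)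
    _ ≤ _ := by have : 0 ≤ δ * x := by positivity
                linarith

/-- Within distance `√δ` of the critical volume the denominator is of order `δ`. -/
lemma DD_upper_near {δ z : ℝ} (hδ : 0 ≤ δ) (hz : 1/2 ≤ z) (hz1 : z ≤ 1)
    (hzδ : (z - 1/2) ^ 2 ≤ δ) : DD δ z ≤ 13 * δ := by
  obtain ⟨x, hx, hxz, hD⟩ := exists_cbrt δ (by linarith : 0 ≤ z)
  have hx1 : x ≤ 1 := by
    by_contra! h
    have := one_lt_pow₀ h (n := 3) (by norm_num)
    linarith
  have hs := lt_sC
  have hs' := sC_lt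
  have e : z - 1/2 = (x - sC) * (x ^ 2 + x * sC + sC ^ 2) := by
    rw [← hxz]; linear_combination sC_cube
  have hq : (x - sC) ^ 2 ≤ 4 * (z - 1/2) ^ 2 := by
    rw [e, mul_pow]
    have h2 : 1/2 ≤ x ^ 2 + x * sC + sC ^ 2 := by nlinarith
    have h3 : 1/4 ≤ (x ^ 2 + x * sC + sC ^ 2) ^ 2 := by nlinarith
    nlinarith [sq_nonneg (x - sC)]
  rw [hD]
  have : (x - sC) ^ 2 * (x + 2 * sC) ≤ (x - sC) ^ 2 * 3 :=
    mul_le_mul_of_nonneg_left (by linarith) (sq_nonneg _)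
  have : δ * x ≤ δ * 1 := mul_le_mul_of_nonneg_left hx1 hδ
  linarith

lemma DD_upper {δ z : ℝ} (hδ1 : δ ≤ 1) (hz : 0 ≤ z) (hz1 : z ≤ 1) : DD δ z ≤ 3 := by
  have h1 : z ^ ((1:ℝ)/3) ≤ 1 := Real.rpow_le_one hz hz1 (by norm_num)
  have h0 : 0 ≤ z ^ ((1:ℝ)/3) := by positivity
  unfold DD
  rw [abs_of_nonneg hz, lam_eq]
  nlinarith [mul_nonneg (sq_nonneg sC) h0]

/-- `P_δ(z) = ∫₀^z 1 / D_δ`. -/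
noncomputable def PP (δ z : ℝ) : ℝ := ∫ y in (0:ℝ)..z, 1 / DD δ y

/-- `S_δ(z) = ∫₀^z y / D_δ(y) dy`. -/
noncomputable def SS (δ z : ℝ) : ℝ := ∫ y in (0:ℝ)..z, y / DD δ y

lemma inv_DD_cont {δ : ℝ} (hδ : 0 < δ) : Continuous fun y => 1 / DD δ y :=
  continuous_const.div (DD_cont δ) (fun y => (DD_pos hδ y).ne')

lemma id_DD_cont {δ : ℝ} (hδ : 0 < δ) : Continuous fun y => y / DD δ y :=
  continuous_id.div (DD_cont δ) (fun y => (DD_pos hδ y).ne')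

lemma PP_deriv {δ : ℝ} (hδ : 0 < δ) (z : ℝ) : HasDerivAt (PP δ) (1 / DD δ z) z :=
  intervalIntegral.integral_hasDerivAt_right ((inv_DD_cont hδ).intervalIntegrable _ _)
    ((inv_DD_cont hδ).stronglyMeasurableAtFilter _ _) (inv_DD_cont hδ).continuousAt

lemma SS_deriv {δ : ℝ} (hδ : 0 < δ) (z : ℝ) : HasDerivAt (SS δ) (z / DD δ z) z :=
  intervalIntegral.integral_hasDerivAt_right ((id_DD_cont hδ).intervalIntegrable _ _)
    ((id_DD_cont hδ).stronglyMeasurableAtFilter _ _) (id_DD_cont hδ).continuousAt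

lemma PP_cont {δ : ℝ} (hδ : 0 < δ) : Continuous (PP δ) :=
  continuous_iff_continuousAt.2 fun z => (PP_deriv hδ z).continuousAt

lemma SS_cont {δ : ℝ} (hδ : 0 < δ) : Continuous (SS δ) :=
  continuous_iff_continuousAt.2 fun z => (SS_deriv hδ z).continuousAt

lemma PP_sub {δ : ℝ} (hδ : 0 < δ) (z w : ℝ) : PP δ w - PP δ z = ∫ y in z..w, 1 / DD δ y :=
  intervalIntegral.integral_interval_sub_left ((inv_DD_cont hδ).intervalIntegrable _ _)
    ((inv_DD_cont hδ).intervalIntegrable _ _)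

lemma SS_sub {δ : ℝ} (hδ : 0 < δ) (z w : ℝ) : SS δ w - SS δ z = ∫ y in z..w, y / DD δ y :=
  intervalIntegral.integral_interval_sub_left ((id_DD_cont hδ).intervalIntegrable _ _)
    ((id_DD_cont hδ).intervalIntegrable _ _)

lemma PP_zero (δ : ℝ) : PP δ 0 = 0 := by simp [PP]

lemma SS_zero (δ : ℝ) : SS δ 0 = 0 := by simp [SS]

lemma PP_mono {δ : ℝ} (hδ : 0 < δ) {z w : ℝ} (h : z ≤ w) : PP δ z ≤ PP δ w := by
  have := PP_sub hδ z w
  have h2 : 0 ≤ ∫ y in z..w, 1 / DD δ y :=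
    intervalIntegral.integral_nonneg h fun y _ => (div_pos one_pos (DD_pos hδ y)).le
  linarith

lemma SS_mono {δ : ℝ} (hδ : 0 < δ) {z w : ℝ} (hz : 0 ≤ z) (h : z ≤ w) : SS δ z ≤ SS δ w := by
  have := SS_sub hδ z w
  have h2 : 0 ≤ ∫ y in z..w, y / DD δ y :=
    intervalIntegral.integral_nonneg h fun y hy =>
      div_nonneg (hz.trans hy.1) (DD_pos hδ y).le
  linarith

/-- A bound `f ≤ K` integrates to a linear bound, for continuous `f`. -/
lemma integral_le_const {f : ℝ → ℝ} (hf : Continuous f) {a b K : ℝ} (hab : a ≤ b)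
    (h : ∀ y ∈ Icc a b, f y ≤ K) : ∫ y in a..b, f y ≤ K * (b - a) := by
  calc ∫ y in a..b, f y ≤ ∫ _ in a..b, K :=
        intervalIntegral.integral_mono_on hab (hf.intervalIntegrable _ _)
          (continuous_const.intervalIntegrable _ _) h
    _ = K * (b - a) := by simp [mul_comm]

/-- `P_δ(1)` is at most of order `δ ^ (-1/2)`. -/
lemma PP_one_le {δ : ℝ} (hδ : 0 < δ) (hδ1 : δ ≤ 1) : PP δ 1 ≤ 80 / √δ := by
  have hr : 0 < √δ := Real.sqrt_pos.2 hδ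
  have hr2 : √δ ^ 2 = δ := Real.sq_sqrt hδ.le
  have hd : ∀ z : ℝ, HasDerivAt (fun z => 20 / √δ * Real.arctan ((z - 1/2) / √δ))
      (20 / ((z - 1/2) ^ 2 + δ)) z := by
    intro z
    have h1 : HasDerivAt (fun z : ℝ => (z - 1/2) / √δ) (1 / √δ) z :=
      ((hasDerivAt_id z).sub_const _).div_const _
    have h2 := (h1.arctan).const_mul (20 / √δ)
    refine h2.congr_deriv ?_
    rw [div_pow, hr2]
    have : 0 < (z - 1/2) ^ 2 + δ := by positivity
    have h3 : (0:ℝ) < 1 + (z - 1/2) ^ 2 / δ := by positivity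
    field_simp
    rw [hr2]; ring
  have hc : Continuous fun z : ℝ => 20 / ((z - 1/2) ^ 2 + δ) :=
    continuous_const.div (by fun_prop) (fun z => by positivity)
  have hI : ∫ z in (0:ℝ)..1, 20 / ((z - 1/2) ^ 2 + δ) =
      20 / √δ * Real.arctan ((1 - 1/2) / √δ) - 20 / √δ * Real.arctan ((0 - 1/2) / √δ) :=
    intervalIntegral.integral_eq_sub_of_hasDerivAt (fun z _ => hd z) (hc.intervalIntegrable _ _)
  -- `∫ 20 / ((z - 1/2) ^ 2 + δ)` is an arctangent with total variation at most `20 π / √δ`.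
  have hle : PP δ 1 ≤ ∫ z in (0:ℝ)..1, 20 / ((z - 1/2) ^ 2 + δ) := by
    unfold PP
    refine intervalIntegral.integral_mono_on zero_le_one ((inv_DD_cont hδ).intervalIntegrable _ _)
      (hc.intervalIntegrable _ _) fun z hz => ?_
    have h0 : 0 < ((z - 1/2) ^ 2 + δ) / 20 := by positivity
    calc 1 / DD δ z ≤ 1 / (((z - 1/2) ^ 2 + δ) / 20) :=
          one_div_le_one_div_of_le h0 (DD_lower hδ.le hδ1 hz.1 hz.2)
      _ = _ := by rw [one_div_div]
  have h1 := (Real.arctan_lt_pi_div_two ((1 - 1/2) / √δ)).le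
  have h2 := (Real.neg_pi_div_two_lt_arctan ((0 - 1/2) / √δ)).le
  have hp := Real.pi_le_four
  rw [hI, ← mul_sub] at hle
  calc PP δ 1 ≤ _ := hle
    _ ≤ 20 / √δ * 4 := by gcongr; linarith
    _ = _ := by ring

/-- `P_δ(5/8)` is at least of order `δ ^ (-1/2)`. -/
lemma le_PP {δ : ℝ} (hδ : 0 < δ) (hδ1 : δ ≤ 1/64) : 1 / (13 * √δ) ≤ PP δ (5/8) := by
  have hr : 0 < √δ := Real.sqrt_pos.2 hδ
  have hr2 : √δ ^ 2 = δ := Real.sq_sqrt hδ.le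
  have hr8 : √δ ≤ 1/8 := by
    by_contra! h
    nlinarith
  have h1 : PP δ (1/2 + √δ) ≤ PP δ (5/8) := PP_mono hδ (by linarith)
  have h2 : PP δ 0 ≤ PP δ (1/2) := PP_mono hδ (by norm_num)
  rw [PP_zero] at h2
  have h3 := PP_sub hδ (1/2) (1/2 + √δ)
  have h4 : ∫ _ in (1/2 : ℝ)..(1/2 + √δ), 1 / (13 * δ) ≤
      ∫ y in (1/2 : ℝ)..(1/2 + √δ), 1 / DD δ y := by
    refine intervalIntegral.integral_mono_on (by linarith)
      (continuous_const.intervalIntegrable _ _) ((inv_DD_cont hδ).intervalIntegrable _ _)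
      fun z hz => ?_
    apply one_div_le_one_div_of_le (DD_pos hδ z)
    apply DD_upper_near hδ.le hz.1 (by linarith [hz.2])
    nlinarith [hz.1, hz.2]
  rw [intervalIntegral.integral_const, smul_eq_mul] at h4
  have h5 : (1/2 + √δ - 1/2) * (1 / (13 * δ)) = 1 / (13 * √δ) := by
    nth_rewrite 2 [← hr2]; field_simp; ring
  linarith

lemma PP_one_sub {δ : ℝ} (hδ : 0 < δ) (hδ1 : δ ≤ 1) : PP δ 1 ≤ PP δ (5/8) + 480 := by
  have h := PP_sub hδ (5/8) 1
  have h2 := integral_le_const (inv_DD_cont hδ) (a := 5/8) (b := 1) (K := 1280) (by norm_num)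
    (fun y hy => by
      have := DD_lower hδ.le hδ1 (by linarith [hy.1] : 0 ≤ y) hy.2
      have h3 : 1/1280 ≤ DD δ y := by nlinarith [hy.1]
      calc 1 / DD δ y ≤ 1 / (1/1280) := one_div_le_one_div_of_le (by norm_num) h3
        _ = 1280 := by norm_num)
  linarith

lemma PP_quarter_le {δ : ℝ} (hδ : 0 < δ) (hδ1 : δ ≤ 1) : PP δ (1/4) ≤ 80 := by
  have h2 := integral_le_const (inv_DD_cont hδ) (a := 0) (b := 1/4) (K := 320) (by norm_num)
    (fun y hy => by
      have := DD_lower hδ.le hδ1 hy.1 (by linarith [hy.2] : y ≤ 1)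
      have h3 : 1/320 ≤ DD δ y := by nlinarith [hy.2]
      calc 1 / DD δ y ≤ 1 / (1/320) := one_div_le_one_div_of_le (by norm_num) h3
        _ = 320 := by norm_num)
  unfold PP; linarith

lemma PP_far {δ ξ : ℝ} (hδ : 0 < δ) (hξ : 1 ≤ ξ) : PP δ ξ ≤ PP δ 1 + 25 * Real.log ξ := by
  have h := PP_sub hδ 1 ξ
  have h2 : ∫ y in (1:ℝ)..ξ, 1 / DD δ y ≤ ∫ y in (1:ℝ)..ξ, 25 * y⁻¹ := by
    refine intervalIntegral.integral_mono_on hξ ((inv_DD_cont hδ).intervalIntegrable _ _)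
      ?_ fun y hy => ?_
    · apply ContinuousOn.intervalIntegrable
      rw [uIcc_of_le hξ]
      exact continuousOn_const.mul (continuousOn_id.inv₀ fun y hy => by
        have := hy.1; simp only [id]; linarith)
    · have hy0 : 0 < y := by linarith [hy.1]
      calc 1 / DD δ y ≤ 1 / (y / 25) :=
            one_div_le_one_div_of_le (by positivity) (DD_lower_far hδ.le hy.1)
        _ = 25 * y⁻¹ := by field_simp
  rw [intervalIntegral.integral_const_mul, integral_inv_of_pos one_pos (by linarith), div_one] at h2
  linarith

/-- The total exponent rate: `P_δ + S_δ` is at most of order `δ ^ (-1/2)`, up to linear growth. -/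
lemma PS_le {δ ξ : ℝ} (hδ : 0 < δ) (hδ1 : δ ≤ 1) (hξ : 0 ≤ ξ) :
    PP δ ξ + SS δ ξ ≤ 210 / √δ * (1 + ξ) := by
  have hr : 0 < √δ := Real.sqrt_pos.2 hδ
  have hr1 : √δ ≤ 1 := Real.sqrt_le_one.2 hδ1
  have h50 : 50 ≤ 50 / √δ := by rw [le_div_iff₀ hr]; linarith
  have hS1 : SS δ 1 ≤ PP δ 1 := by
    unfold SS PP
    refine intervalIntegral.integral_mono_on zero_le_one ((id_DD_cont hδ).intervalIntegrable _ _)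
      ((inv_DD_cont hδ).intervalIntegrable _ _) fun y hy => ?_
    exact div_le_div_of_nonneg_right hy.2 (DD_pos hδ y).le
  have hP1 := PP_one_le hδ hδ1
  have key : PP δ ξ + SS δ ξ ≤ 160 / √δ + 50 / √δ * ξ := by
    have e160 : 160 / √δ = 2 * (80 / √δ) := by ring
    rcases le_total ξ 1 with h | h
    · have := PP_mono hδ h
      have := SS_mono hδ hξ h
      have : 0 ≤ 50 / √δ * ξ := by positivity
      linarith
    · have a1 := PP_sub hδ 1 ξ
      have a2 := SS_sub hδ 1 ξ
      have b1 := integral_le_const (inv_DD_cont hδ) (K := 25) h fun y hy => by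
        have := DD_lower_far hδ.le hy.1
        rw [div_le_iff₀ (DD_pos hδ y)]; linarith [hy.1]
      have b2 := integral_le_const (id_DD_cont hδ) (K := 25) h fun y hy => by
        have := DD_lower_far hδ.le hy.1
        rw [div_le_iff₀ (DD_pos hδ y)]; linarith [hy.1]
      have : 50 * ξ ≤ 50 / √δ * ξ := mul_le_mul_of_nonneg_right h50 hξ
      linarith
  calc _ ≤ _ := key
    _ ≤ 210 / √δ + 210 / √δ * ξ := by gcongr <;> norm_num
    _ = _ := by ring

/-! ### The kernel without the singular weight -/

/-- `F_i(ξ) = a_δ(ξ) Γ_i(ξ; ε, ε̃, δ)`, written without the singular weight `b_δ`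
(see `aF_mul_Gam`). -/
noncomputable def FF (i : ℕ) (δ ε εt ξ : ℝ) : ℝ :=
  ∫ z in (0:ℝ)..ξ, gamF i z / DD δ z *
    Real.exp ((1 - ε) * (PP δ ξ - PP δ z) - εt * (SS δ ξ - SS δ z))

lemma gamF_cont (i : ℕ) : Continuous (gamF i) := by
  unfold gamF
  by_cases h : i = 1
  · simpa [h] using continuous_id'
  · simpa [h] using continuous_const

lemma gamF_nonneg (i : ℕ) {z : ℝ} (hz : 0 ≤ z) : 0 ≤ gamF i z := by
  unfold gamF; split_ifs <;> linarith

lemma gamF_le (i : ℕ) {z : ℝ} (hz : 0 ≤ z) : gamF i z ≤ 1 + z := by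
  unfold gamF; split_ifs <;> linarith

lemma gamF_ge (i : ℕ) {z : ℝ} (hz : 1/8 ≤ z) : 1/8 ≤ gamF i z := by
  unfold gamF; split_ifs <;> linarith

lemma gam_div_cont (i : ℕ) {δ : ℝ} (hδ : 0 < δ) : Continuous fun z => gamF i z / DD δ z :=
  (gamF_cont i).div (DD_cont δ) (fun y => (DD_pos hδ y).ne')

lemma FF_integrand_cont (i : ℕ) {δ : ℝ} (hδ : 0 < δ) (ε εt ξ : ℝ) :
    Continuous fun z => gamF i z / DD δ z *
      Real.exp ((1 - ε) * (PP δ ξ - PP δ z) - εt * (SS δ ξ - SS δ z)) := by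
  have h1 := PP_cont hδ
  have h2 := SS_cont hδ
  have h3 := gam_div_cont i hδ
  fun_prop

lemma FF_cont (i : ℕ) {δ : ℝ} (hδ : 0 < δ) (ε εt : ℝ) : Continuous (FF i δ ε εt) := by
  have h1 := PP_cont hδ
  have h2 := SS_cont hδ
  have h3 := gam_div_cont i hδ
  have e : FF i δ ε εt = fun ξ => Real.exp ((1 - ε) * PP δ ξ - εt * SS δ ξ) *
      ∫ z in (0:ℝ)..ξ, gamF i z / DD δ z *
        Real.exp (- ((1 - ε) * PP δ z - εt * SS δ z)) := by
    funext ξ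
    unfold FF
    rw [← intervalIntegral.integral_const_mul]
    congr 1
    funext z
    rw [mul_left_comm, ← Real.exp_add]
    congr 2; ring
  rw [e]
  have h4 : Continuous fun z => gamF i z / DD δ z *
        Real.exp (- ((1 - ε) * PP δ z - εt * SS δ z)) := by fun_prop
  have h5 := intervalIntegral.continuous_primitive
    (fun a b => h4.intervalIntegrable (μ := volume) a b) 0
  fun_prop

/-- The derivative of the denominator is `b_δ - 1`. -/
lemma DD_deriv (δ : ℝ) {y : ℝ} (hy : 0 < y) : HasDerivAt (DD δ) (bF δ y - 1) y := by
  have h : HasDerivAt (fun y : ℝ => 1 + y - (lamLSW - δ) * y ^ ((1:ℝ)/3))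
      (1 - (lamLSW - δ) * ((1:ℝ)/3 * y ^ ((1:ℝ)/3 - 1))) y :=
    ((hasDerivAt_id y).const_add 1).sub
      ((Real.hasDerivAt_rpow_const (Or.inl hy.ne')).const_mul _)
  have h2 := h.congr_of_eventuallyEq (f₁ := DD δ) (by
    filter_upwards [lt_mem_nhds hy] with z hz
    simp only [DD, abs_of_pos hz])
  refine h2.congr_deriv ?_
  unfold bF
  have : (1:ℝ)/3 - 1 = -(2:ℝ)/3 := by norm_num
  rw [this]; ring

lemma bF_contOn {δ a b : ℝ} (ha : 0 < a) : ContinuousOn (bF δ) (Icc a b) := by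
  unfold bF
  refine continuousOn_const.sub (continuousOn_const.mul ?_)
  exact continuousOn_id.rpow_const fun y hy => Or.inl (by simp only [id]; linarith [hy.1])

/-- Since `b_δ = 1 + D_δ'`, the exponent in `Γ_i` is a logarithmic derivative plus a smooth part. -/
lemma exponent_eq {δ : ℝ} (hδ : 0 < δ) (ε εt : ℝ) {z ξ : ℝ} (hz : 0 < z) (hξ : z ≤ ξ) :
    ∫ y in z..ξ, aF δ y * (bF δ y - εt * y - ε) =
      Real.log (DD δ ξ) - Real.log (DD δ z) +
        ((1 - ε) * (PP δ ξ - PP δ z) - εt * (SS δ ξ - SS δ z)) := by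
  have hb : ContinuousOn (bF δ) (Icc z ξ) := bF_contOn hz
  have hi : IntervalIntegrable (fun y => (bF δ y - 1) / DD δ y) volume z ξ := by
    apply ContinuousOn.intervalIntegrable
    rw [uIcc_of_le hξ]
    exact (hb.sub continuousOn_const).div (DD_cont δ).continuousOn
      fun y _ => (DD_pos hδ y).ne'
  have hlog : ∫ y in z..ξ, (bF δ y - 1) / DD δ y =
      Real.log (DD δ ξ) - Real.log (DD δ z) := by
    refine intervalIntegral.integral_eq_sub_of_hasDerivAt
      (f := fun y => Real.log (DD δ y)) (fun y hy => ?_) hi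
    rw [uIcc_of_le hξ] at hy
    exact (DD_deriv δ (hz.trans_le hy.1)).log (DD_pos hδ y).ne'
  rw [PP_sub hδ, SS_sub hδ, ← hlog, ← intervalIntegral.integral_const_mul,
    ← intervalIntegral.integral_const_mul, ← intervalIntegral.integral_sub
      (((inv_DD_cont hδ).intervalIntegrable _ _).const_mul _)
      (((id_DD_cont hδ).intervalIntegrable _ _).const_mul _),
    ← intervalIntegral.integral_add hi
      ((((inv_DD_cont hδ).intervalIntegrable _ _).const_mul _).sub
        (((id_DD_cont hδ).intervalIntegrable _ _).const_mul _))]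
  refine intervalIntegral.integral_congr fun y hy => ?_
  rw [uIcc_of_le hξ] at hy
  rw [aF_eq (hz.le.trans hy.1)]
  ring

lemma aF_mul_Gam (i : ℕ) {δ : ℝ} (hδ : 0 < δ) (ε εt : ℝ) {ξ : ℝ} (hξ : 0 ≤ ξ) :
    aF δ ξ * Gam i δ ε εt ξ = FF i δ ε εt ξ := by
  unfold Gam FF
  rw [← intervalIntegral.integral_const_mul]
  refine intervalIntegral.integral_congr_ae (ae_of_all _ fun z hz => ?_)
  rw [uIoc_of_le hξ] at hz
  rw [exponent_eq hδ ε εt hz.1 hz.2, Real.exp_add, Real.exp_sub, Real.exp_log (DD_pos hδ _),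
    Real.exp_log (DD_pos hδ _), aF_eq hξ]
  have h1 := (DD_pos hδ ξ).ne'
  have h2 := (DD_pos hδ z).ne'
  field_simp

lemma Gfull_eq (i : ℕ) {δ : ℝ} (hδ : 0 < δ) (ε εt : ℝ) (h : ℝ → ℝ) :
    Gfull i δ ε εt h = ∫ ξ in Ioi (0:ℝ), ξ * h ξ * FF i δ ε εt ξ := by
  unfold Gfull
  refine setIntegral_congr_fun measurableSet_Ioi fun ξ hξ => ?_
  rw [← aF_mul_Gam i hδ ε εt (le_of_lt hξ)]; ring

lemma Ghat_eq (i : ℕ) {δ : ℝ} (hδ : 0 < δ) (h : ℝ → ℝ) :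
    Ghat i δ h = ∫ ξ in Ioc (0:ℝ) 1, ξ * h ξ * FF i δ 0 0 ξ := by
  unfold Ghat GamHat
  rw [intervalIntegral.integral_of_le zero_le_one]
  refine setIntegral_congr_fun measurableSet_Ioc fun ξ hξ => ?_
  rw [← aF_mul_Gam i hδ 0 0 hξ.1.le]; ring

lemma FF_nonneg (i : ℕ) {δ : ℝ} (hδ : 0 < δ) (ε εt : ℝ) {ξ : ℝ} (hξ : 0 ≤ ξ) :
    0 ≤ FF i δ ε εt ξ :=
  intervalIntegral.integral_nonneg hξ fun z hz =>
    mul_nonneg (div_nonneg (gamF_nonneg i hz.1) (DD_pos hδ z).le) (Real.exp_pos _).le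

lemma FF_le (i : ℕ) {δ : ℝ} (hδ : 0 < δ) {ε εt : ℝ} (hε : 0 ≤ ε) (hεt : 0 ≤ εt) {ξ : ℝ}
    (hξ : 0 ≤ ξ) : FF i δ ε εt ξ ≤ FF i δ 0 0 ξ := by
  refine intervalIntegral.integral_mono_on hξ
    ((FF_integrand_cont i hδ ε εt ξ).intervalIntegrable _ _)
    ((FF_integrand_cont i hδ 0 0 ξ).intervalIntegrable _ _) fun z hz => ?_
  refine mul_le_mul_of_nonneg_left (Real.exp_le_exp.2 ?_)
    (div_nonneg (gamF_nonneg i hz.1) (DD_pos hδ z).le)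
  have h1 := PP_mono hδ hz.2
  have h2 := SS_mono hδ hz.1 hz.2
  nlinarith [mul_nonneg hε (sub_nonneg.2 h1), mul_nonneg hεt (sub_nonneg.2 h2)]

lemma abs_exp_neg_sub_le {u v : ℝ} (hu : 0 ≤ u) (hv : 0 ≤ v) :
    |Real.exp (-u) - Real.exp (-v)| ≤ |u - v| := by
  wlog h : u ≤ v generalizing u v
  · rw [abs_sub_comm, abs_sub_comm u]; exact this hv hu (le_of_not_ge h)
  have h1 : Real.exp (-v) ≤ Real.exp (-u) := Real.exp_le_exp.2 (by linarith)
  rw [abs_of_nonneg (by linarith), abs_of_nonpos (by linarith)]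
  have h2 : Real.exp (-v) = Real.exp (-u) * Real.exp (-(v - u)) := by
    rw [← Real.exp_add]; congr 1; ring
  have h3 := Real.add_one_le_exp (-(v - u))
  have h4 : Real.exp (-u) ≤ 1 := Real.exp_le_one_iff.2 (by linarith)
  have h5 := Real.exp_pos (-u)
  rw [h2]
  nlinarith

/-- Lipschitz dependence of `F_i` on `(ε, ε̃)`, relative to the unperturbed `F_i`. -/
lemma FF_lip (i : ℕ) {δ : ℝ} (hδ : 0 < δ) {ε εt ε' εt' d : ℝ} (hε : 0 ≤ ε) (hεt : 0 ≤ εt)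
    (hε' : 0 ≤ ε') (hεt' : 0 ≤ εt') (h1 : |ε - ε'| ≤ d) (h2 : |εt - εt'| ≤ d) {ξ : ℝ}
    (hξ : 0 ≤ ξ) :
    |FF i δ ε εt ξ - FF i δ ε' εt' ξ| ≤ d * (PP δ ξ + SS δ ξ) * FF i δ 0 0 ξ := by
  have c1 := (FF_integrand_cont i hδ ε εt ξ)
  have c2 := (FF_integrand_cont i hδ ε' εt' ξ)
  have c3 := (FF_integrand_cont i hδ 0 0 ξ)
  unfold FF
  rw [← intervalIntegral.integral_sub (c1.intervalIntegrable _ _) (c2.intervalIntegrable _ _),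
    ← intervalIntegral.integral_const_mul]
  refine (intervalIntegral.abs_integral_le_integral_abs hξ).trans ?_
  refine intervalIntegral.integral_mono_on hξ ((c1.sub c2).abs.intervalIntegrable _ _)
    ((c3.const_mul _).intervalIntegrable _ _) fun z hz => ?_
  have hP := PP_mono hδ hz.2
  have hS := SS_mono hδ hz.1 hz.2
  have hP0 := PP_mono hδ hz.1
  have hS0 := SS_mono hδ le_rfl hz.1
  rw [PP_zero] at hP0
  rw [SS_zero] at hS0
  set p := PP δ ξ - PP δ z with hp
  set q := SS δ ξ - SS δ z with hq
  have hp0 : 0 ≤ p := by linarith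
  have hq0 : 0 ≤ q := by linarith
  have hg : 0 ≤ gamF i z / DD δ z := div_nonneg (gamF_nonneg i hz.1) (DD_pos hδ z).le
  have e1 : Real.exp ((1 - ε) * p - εt * q) = Real.exp p * Real.exp (-(ε * p + εt * q)) := by
    rw [← Real.exp_add]; congr 1; ring
  have e2 : Real.exp ((1 - ε') * p - εt' * q) =
      Real.exp p * Real.exp (-(ε' * p + εt' * q)) := by
    rw [← Real.exp_add]; congr 1; ring
  have e3 : Real.exp ((1 - 0) * p - 0 * q) = Real.exp p := by congr 1; ring
  rw [e1, e2, e3, ← mul_sub, ← mul_sub, abs_mul, abs_mul, abs_of_nonneg hg, Real.abs_exp]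
  have k1 := abs_exp_neg_sub_le (u := ε * p + εt * q) (v := ε' * p + εt' * q)
    (by positivity) (by positivity)
  have k2 : |ε * p + εt * q - (ε' * p + εt' * q)| ≤ d * (PP δ ξ + SS δ ξ) := by
    have : ε * p + εt * q - (ε' * p + εt' * q) = (ε - ε') * p + (εt - εt') * q := by ring
    rw [this]
    refine (abs_add_le _ _).trans ?_
    rw [abs_mul, abs_mul, abs_of_nonneg hp0, abs_of_nonneg hq0, mul_add]
    have hd : 0 ≤ d := (abs_nonneg _).trans h1
    have a1 : |ε - ε'| * p ≤ d * PP δ ξ := mul_le_mul h1 (by linarith) hp0 hd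
    have a2 : |εt - εt'| * q ≤ d * SS δ ξ := mul_le_mul h2 (by linarith) hq0 hd
    linarith
  calc _ ≤ gamF i z / DD δ z * (Real.exp p * (d * (PP δ ξ + SS δ ξ))) := by
        gcongr; exact k1.trans k2
    _ = _ := by ring

/-- Growth bound for the unperturbed `F_i`, in units of `A = exp P_δ(5/8)`. -/
lemma FF_zero_le (i : ℕ) {δ : ℝ} (hδ : 0 < δ) (hδ1 : δ ≤ 1) {ξ : ℝ} (hξ : 0 ≤ ξ) :
    FF i δ 0 0 ξ ≤ Real.exp (PP δ (5/8)) * Real.exp 480 * (1 + ξ) ^ 26 := by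
  have hc := PP_cont hδ
  have hi := inv_DD_cont hδ
  -- Bounding `γ_i ≤ 1 + ξ` leaves the exact derivative of `-exp (P_δ(ξ) - P_δ(z))`.
  have hd : Continuous fun z => 1 / DD δ z * Real.exp (PP δ ξ - PP δ z) := by fun_prop
  have e : ∫ z in (0:ℝ)..ξ, 1 / DD δ z * Real.exp (PP δ ξ - PP δ z) =
      -Real.exp (PP δ ξ - PP δ ξ) - -Real.exp (PP δ ξ - PP δ 0) := by
    refine intervalIntegral.integral_eq_sub_of_hasDerivAt
      (f := fun z => -Real.exp (PP δ ξ - PP δ z)) (fun z _ => ?_)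
      (hd.intervalIntegrable _ _)
    refine (((PP_deriv hδ z).const_sub (PP δ ξ)).exp.neg).congr_deriv ?_
    ring
  have h1 : FF i δ 0 0 ξ ≤
      ∫ z in (0:ℝ)..ξ, (1 + ξ) * (1 / DD δ z * Real.exp (PP δ ξ - PP δ z)) := by
    refine intervalIntegral.integral_mono_on hξ
      ((FF_integrand_cont i hδ 0 0 ξ).intervalIntegrable _ _)
      ((hd.const_mul _).intervalIntegrable _ _) fun z hz => ?_
    have e3 : (1 - 0) * (PP δ ξ - PP δ z) - 0 * (SS δ ξ - SS δ z) = PP δ ξ - PP δ z := by ring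
    have hD := DD_pos hδ z
    have hg := gamF_le i hz.1
    rw [e3, ← mul_assoc, mul_one_div]
    gcongr
    linarith [hz.2]
  rw [intervalIntegral.integral_const_mul, e, PP_zero, sub_self, sub_zero, Real.exp_zero] at h1
  have h2 : Real.exp (PP δ ξ) ≤ Real.exp (PP δ (5/8)) * Real.exp 480 * (1 + ξ) ^ 25 := by
    have h480 := PP_one_sub hδ hδ1
    rcases le_total ξ 1 with h | h
    · calc Real.exp (PP δ ξ) ≤ Real.exp (PP δ (5/8) + 480) :=
            Real.exp_le_exp.2 ((PP_mono hδ h).trans h480)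
        _ = Real.exp (PP δ (5/8)) * Real.exp 480 * 1 := by rw [Real.exp_add, mul_one]
        _ ≤ _ := by
          gcongr; exact one_le_pow₀ (by linarith)
    · have hf := PP_far hδ h
      have h0 : 0 < ξ := by linarith
      calc Real.exp (PP δ ξ) ≤ Real.exp (PP δ (5/8) + 480 + 25 * Real.log ξ) :=
            Real.exp_le_exp.2 (by linarith)
        _ = Real.exp (PP δ (5/8)) * Real.exp 480 * ξ ^ 25 := by
          rw [Real.exp_add, Real.exp_add]
          congr 1
          have := Real.exp_nat_mul (Real.log ξ) 25
          rw [Real.exp_log h0] at this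
          exact_mod_cast this
        _ ≤ _ := by gcongr; linarith
  calc FF i δ 0 0 ξ ≤ _ := h1
    _ ≤ (1 + ξ) * Real.exp (PP δ ξ) := by gcongr; linarith
    _ ≤ (1 + ξ) * (Real.exp (PP δ (5/8)) * Real.exp 480 * (1 + ξ) ^ 25) := by gcongr
    _ = _ := by ring

/-- Past the critical volume the unperturbed `F_i` is at least of order `A = exp P_δ(5/8)`. -/
lemma le_FF_zero (i : ℕ) {δ : ℝ} (hδ : 0 < δ) (hδ1 : δ ≤ 1) {ξ : ℝ} (hξ : 5/8 ≤ ξ) :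
    Real.exp (PP δ (5/8)) * (Real.exp (-80) / 192) ≤ FF i δ 0 0 ξ := by
  have hc := FF_integrand_cont i hδ 0 0 ξ
  have hsplit : FF i δ 0 0 ξ = _ := rfl
  unfold FF at hsplit
  have e1 : ∫ _ in (1/8:ℝ)..(1/4), Real.exp (PP δ (5/8)) * (Real.exp (-80) / 24) ≤
      ∫ z in (1/8:ℝ)..(1/4), gamF i z / DD δ z *
        Real.exp ((1 - 0) * (PP δ ξ - PP δ z) - 0 * (SS δ ξ - SS δ z)) := by
    refine intervalIntegral.integral_mono_on (by norm_num)
      (continuous_const.intervalIntegrable _ _) (hc.intervalIntegrable _ _) fun z hz => ?_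
    have e3 : (1 - 0) * (PP δ ξ - PP δ z) - 0 * (SS δ ξ - SS δ z) = PP δ ξ - PP δ z := by ring
    have hz0 : 0 ≤ z := by linarith [hz.1]
    have a1 := gamF_ge i hz.1
    have a2 := DD_upper hδ1 hz0 (by linarith [hz.2])
    have a3 := PP_quarter_le hδ hδ1
    have a4 := PP_mono hδ hz.2
    have a5 := PP_mono hδ hξ
    rw [e3]
    calc _ = (1/8) / 3 * Real.exp (PP δ (5/8) + -80) := by rw [Real.exp_add]; ring
      _ ≤ _ := by
        have := DD_pos hδ z
        gcongr
        linarith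
  have e2 : ∫ z in (1/8:ℝ)..(1/4), gamF i z / DD δ z *
        Real.exp ((1 - 0) * (PP δ ξ - PP δ z) - 0 * (SS δ ξ - SS δ z)) ≤ FF i δ 0 0 ξ := by
    refine intervalIntegral.integral_mono_interval (by norm_num) (by norm_num) (by linarith) ?_
      (hc.intervalIntegrable _ _)
    filter_upwards [ae_restrict_mem measurableSet_Ioc] with z hz
    exact mul_nonneg (div_nonneg (gamF_nonneg i hz.1.le) (DD_pos hδ z).le) (Real.exp_pos _).le
  rw [intervalIntegral.integral_const, smul_eq_mul] at e1
  calc _ = (1/4 - 1/8) * (Real.exp (PP δ (5/8)) * (Real.exp (-80) / 24)) := by ring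
    _ ≤ _ := e1.trans e2

/-! ### The LSW profile and the space Z -/

/-- The unnormalised smooth LSW profile. -/
noncomputable def phi0 (z : ℝ) : ℝ := Real.exp (-∫ y in (0:ℝ)..z, aF 0 y * bF 0 y)

lemma measurable_primitive {f : ℝ → ℝ} (hf : Measurable f) :
    Measurable fun z : ℝ => ∫ y in (0:ℝ)..z, f y := by
  have h1 : Measurable fun z : ℝ => ∫ y in Ioc 0 z, f y := by
    have e : (fun z : ℝ => ∫ y in Ioc 0 z, f y) = fun z =>
        ∫ y, ({p : ℝ × ℝ | 0 < p.2 ∧ p.2 ≤ p.1}.indicator (fun p => f p.2)) (z, y) := by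
      funext z
      rw [← integral_indicator measurableSet_Ioc]
      rfl
    rw [e]
    refine (StronglyMeasurable.integral_prod_right (ν := volume) ?_).measurable
    refine ((hf.comp measurable_snd).indicator ?_).stronglyMeasurable
    exact (measurableSet_lt measurable_const measurable_snd).inter
      (measurableSet_le measurable_snd measurable_fst)
  have h2 : Measurable fun z : ℝ => ∫ y in Ioc z 0, f y := by
    have e : (fun z : ℝ => ∫ y in Ioc z 0, f y) = fun z =>
        ∫ y, ({p : ℝ × ℝ | p.1 < p.2 ∧ p.2 ≤ 0}.indicator (fun p => f p.2)) (z, y) := by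
      funext z
      rw [← integral_indicator measurableSet_Ioc]
      rfl
    rw [e]
    refine (StronglyMeasurable.integral_prod_right (ν := volume) ?_).measurable
    refine ((hf.comp measurable_snd).indicator ?_).stronglyMeasurable
    exact (measurableSet_lt measurable_fst measurable_snd).inter
      (measurableSet_le measurable_snd measurable_const)
  exact h1.sub h2

lemma phi0_measurable : Measurable phi0 := by
  unfold phi0
  refine Real.measurable_exp.comp (measurable_primitive ?_).neg
  unfold aF bF
  fun_prop

lemma phi0_pos (z : ℝ) : 0 < phi0 z := Real.exp_pos _

lemma DD_zero_nonneg {z : ℝ} (hz : 0 ≤ z) : 0 ≤ DD 0 z := by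
  obtain ⟨x, hx, -, hD⟩ := exists_cbrt 0 hz
  have := sC_pos
  rw [hD]; positivity

lemma phi0_lower {z : ℝ} (hz : 0 ≤ z) (hz1 : z ≤ 7/16) : Real.exp (-10240) ≤ phi0 z := by
  refine Real.exp_le_exp.2 (neg_le_neg ?_)
  by_cases hi : IntervalIntegrable (fun y => aF 0 y * bF 0 y) volume 0 z
  · calc ∫ y in (0:ℝ)..z, aF 0 y * bF 0 y ≤ ∫ _ in (0:ℝ)..z, (10240 : ℝ) := by
          refine intervalIntegral.integral_mono_on hz hi
            (continuous_const.intervalIntegrable _ _) fun y hy => ?_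
          have h1 := DD_lower le_rfl zero_le_one hy.1 (by linarith [hy.2] : y ≤ 1)
          have h3 : 1/5120 ≤ DD 0 y := by nlinarith [hy.2]
          have h2 : aF 0 y ≤ 5120 := by
            rw [aF_eq hy.1]
            calc 1 / DD 0 y ≤ 1 / (1/5120) := one_div_le_one_div_of_le (by norm_num) h3
              _ = 5120 := by norm_num
          have h0 : 0 ≤ aF 0 y := by
            rw [aF_eq hy.1]; exact div_nonneg zero_le_one (by linarith)
          have hb : bF 0 y ≤ 2 := by
            unfold bF
            have := sC_pos
            rw [lam_eq]
            have hy0 := Real.rpow_nonneg hy.1 (-(2:ℝ)/3)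
            have : 0 ≤ 1/3 * (3 * sC ^ 2 - 0) * y ^ (-(2:ℝ)/3) := by
              rw [sub_zero]; positivity
            linarith
          nlinarith
      _ = 10240 * z := by simp [mul_comm]
      _ ≤ 10240 := by linarith
  · rw [intervalIntegral.integral_undef hi]; norm_num

/-- Left of the critical volume `a₀ b₀` is bounded below by an integrable function, since
`b₀ ≥ 0` near `1/2`. At `z = 1/2` the integral diverges and has the value `0`. -/
lemma phi0_upper {z : ℝ} (hz : 0 ≤ z) (hz1 : z ≤ 1/2) : phi0 z ≤ Real.exp 120 := by
  refine Real.exp_le_exp.2 (neg_le.1 ?_)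
  by_cases hi : IntervalIntegrable (fun y => aF 0 y * bF 0 y) volume 0 z
  · have hr : IntervalIntegrable (fun y : ℝ => -40 * y ^ (-(2:ℝ)/3)) volume 0 z :=
      (intervalIntegral.intervalIntegrable_rpow' (by norm_num)).const_mul _
    calc (-120 : ℝ) ≤ -120 * z ^ ((1:ℝ)/3) := by
          have := Real.rpow_le_one hz (by linarith : z ≤ 1) (by norm_num : (0:ℝ) ≤ 1/3)
          linarith
      _ = ∫ y in (0:ℝ)..z, -40 * y ^ (-(2:ℝ)/3) := by
          rw [intervalIntegral.integral_const_mul, integral_rpow (Or.inl (by norm_num)),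
            Real.zero_rpow (by norm_num)]
          have : -(2:ℝ)/3 + 1 = 1/3 := by norm_num
          rw [this]; ring
      _ ≤ _ := by
          refine intervalIntegral.integral_mono_on_of_le_Ioo hz hr hi fun y hy => ?_
          obtain ⟨x, hx, hxy, hD⟩ := exists_cbrt 0 hy.1.le
          have hx0 : 0 < x := by
            rcases hx.eq_or_lt with h | h
            · rw [← h] at hxy; norm_num at hxy; linarith [hy.1]
            · exact h
          have hs := lt_sC
          have hs' := sC_lt
          have e : y ^ (-(2:ℝ)/3) = 1 / x ^ 2 := by
            rw [← hxy, ← Real.rpow_natCast x 3, ← Real.rpow_mul hx]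
            have : ((3:ℕ):ℝ) * (-(2:ℝ)/3) = -((2:ℕ):ℝ) := by norm_num
            rw [this, Real.rpow_neg hx, Real.rpow_natCast, one_div]
          rw [aF_eq hy.1.le]
          have eb : bF 0 y = 2 - sC ^ 2 / x ^ 2 := by
            unfold bF; rw [e, lam_eq]; ring
          have hD0 := DD_zero_nonneg hy.1.le
          rw [eb, e]
          have hx2 : 0 < 1 / x ^ 2 := by positivity
          -- Either `b₀ ≥ 0`, or `z` is away from the double root and `a₀` is bounded.
          by_cases hc : sC ^ 2 / x ^ 2 ≤ 2
          · have : 0 ≤ 1 / DD 0 y * (2 - sC ^ 2 / x ^ 2) :=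
              mul_nonneg (div_nonneg zero_le_one hD0) (by linarith)
            linarith
          · push Not at hc
            rw [lt_div_iff₀ (by positivity)] at hc
            have hx6 : x ≤ 3/5 := by
              by_contra! h
              nlinarith
            have hDl : 1/40 ≤ DD 0 y := by
              rw [hD]
              have : (3/20:ℝ) ^ 2 ≤ (x - sC) ^ 2 := by nlinarith
              nlinarith [sq_nonneg (x - sC)]
            have ha : 1 / DD 0 y ≤ 40 := by
              calc 1 / DD 0 y ≤ 1 / (1/40) := one_div_le_one_div_of_le (by norm_num) hDl
                _ = 40 := by norm_num
            have ha0 : 0 ≤ 1 / DD 0 y := div_nonneg zero_le_one hD0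
            have hb : -(1 / x ^ 2) ≤ 2 - sC ^ 2 / x ^ 2 := by
              have : sC ^ 2 / x ^ 2 ≤ 1 / x ^ 2 := by
                gcongr; nlinarith
              linarith
            calc -40 * (1 / x ^ 2) ≤ 1 / DD 0 y * (-(1 / x ^ 2)) := by nlinarith
              _ ≤ _ := mul_le_mul_of_nonneg_left hb ha0
  · rw [intervalIntegral.integral_undef hi]; norm_num

lemma phiLSW_eq (z : ℝ) : PhiLSW z =
    if z ≤ 1/2 then phi0 z / ∫ t in (0:ℝ)..(1/2 : ℝ), t * phi0 t else 0 := rfl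

lemma phi0_norm_pos : 0 < ∫ t in (0:ℝ)..(1/2 : ℝ), t * phi0 t := by
  refine intervalIntegral.intervalIntegral_pos_of_pos_on ?_
    (fun t ht => mul_pos ht.1 (phi0_pos t)) (by norm_num)
  rw [intervalIntegrable_iff_integrableOn_Ioc_of_le (by norm_num)]
  refine Measure.integrableOn_of_bounded (M := Real.exp 120) (by simp)
    (measurable_id.mul phi0_measurable).aestronglyMeasurable ?_
  filter_upwards [ae_restrict_mem measurableSet_Ioc] with t ht
  change ‖t * phi0 t‖ ≤ _
  rw [Real.norm_of_nonneg (mul_pos ht.1 (phi0_pos t)).le]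
  have := phi0_upper ht.1.le ht.2
  have := phi0_pos t
  nlinarith [ht.1, ht.2]

lemma phiLSW_measurable : Measurable PhiLSW := by
  have e : PhiLSW = fun z => if z ≤ 1/2 then phi0 z / ∫ t in (0:ℝ)..(1/2 : ℝ), t * phi0 t else 0 :=
    funext phiLSW_eq
  rw [e]
  exact Measurable.ite measurableSet_Iic (phi0_measurable.div_const _) measurable_const

lemma phiLSW_nonneg (z : ℝ) : 0 ≤ PhiLSW z := by
  rw [phiLSW_eq]
  split_ifs
  · exact (div_pos (phi0_pos z) phi0_norm_pos).le
  · exact le_rfl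

/-- The facts about `Φ_LSW * Φ_LSW` that matter: it is bounded and nonnegative, vanishes on
`[1, ∞)`, and is bounded below on an interval strictly between the critical volume and `1`. -/
lemma conv_facts : ∃ M c₀ : ℝ, 0 < M ∧ 0 < c₀ ∧
    (∀ z, 0 ≤ z → z ≤ 1 → 0 ≤ conv PhiLSW PhiLSW z ∧ conv PhiLSW PhiLSW z ≤ M) ∧
    (∀ z, 5/8 ≤ z → z ≤ 3/4 → c₀ ≤ conv PhiLSW PhiLSW z) ∧
    (∀ z, 1 ≤ z → conv PhiLSW PhiLSW z = 0) := by
  set N := ∫ t in (0:ℝ)..(1/2 : ℝ), t * phi0 t with hN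
  have hN0 : 0 < N := phi0_norm_pos
  set B := Real.exp 120 / N with hB
  set m := Real.exp (-10240) / N with hm
  have hB0 : 0 < B := by positivity
  have hm0 : 0 < m := by positivity
  have hub : ∀ z, 0 ≤ z → PhiLSW z ≤ B := by
    intro z hz
    rw [phiLSW_eq]
    split_ifs with h
    · exact div_le_div_of_nonneg_right (phi0_upper hz h) hN0.le
    · exact hB0.le
  have hlb : ∀ z, 0 ≤ z → z ≤ 7/16 → m ≤ PhiLSW z := by
    intro z hz hz1
    rw [phiLSW_eq, if_pos (by linarith)]
    exact div_le_div_of_nonneg_right (phi0_lower hz hz1) hN0.le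
  have hmeas : ∀ z, Measurable fun y => PhiLSW (z - y) * PhiLSW y := fun z =>
    (phiLSW_measurable.comp (measurable_const.sub measurable_id)).mul phiLSW_measurable
  have hnn : ∀ z y, 0 ≤ PhiLSW (z - y) * PhiLSW y := fun z y =>
    mul_nonneg (phiLSW_nonneg _) (phiLSW_nonneg _)
  have hle : ∀ z y, 0 ≤ y → y ≤ z → PhiLSW (z - y) * PhiLSW y ≤ B * B := fun z y hy hyz =>
    mul_le_mul (hub _ (by linarith)) (hub _ hy) (phiLSW_nonneg _) hB0.le
  have hintv : ∀ z, 0 ≤ z →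
      IntervalIntegrable (fun y => PhiLSW (z - y) * PhiLSW y) volume 0 z := by
    intro z hz
    rw [intervalIntegrable_iff_integrableOn_Ioc_of_le hz]
    refine Measure.integrableOn_of_bounded (M := B * B) (by simp)
      (hmeas z).aestronglyMeasurable ?_
    filter_upwards [ae_restrict_mem measurableSet_Ioc] with t ht
    rw [Real.norm_of_nonneg (hnn z t)]
    exact hle z t ht.1.le ht.2
  refine ⟨B * B, 1/16 * (m * m), by positivity, by positivity, fun z hz hz1 => ⟨?_, ?_⟩,
    fun z hz hz1 => ?_, fun z hz => ?_⟩
  · unfold conv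
    have := intervalIntegral.integral_nonneg (μ := volume) hz fun y _ => hnn z y
    linarith
  · unfold conv
    have : ∫ y in (0:ℝ)..z, PhiLSW (z - y) * PhiLSW y ≤ ∫ _ in (0:ℝ)..z, B * B :=
      intervalIntegral.integral_mono_on hz (hintv z hz)
        (continuous_const.intervalIntegrable _ _) fun y hy => hle z y hy.1 hy.2
    rw [intervalIntegral.integral_const, smul_eq_mul] at this
    have hBB : 0 < B * B := by positivity
    nlinarith
  · unfold conv
    have h1 : ∫ y in (5/16:ℝ)..(7/16), PhiLSW (z - y) * PhiLSW y ≤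
        ∫ y in (0:ℝ)..z, PhiLSW (z - y) * PhiLSW y := by
      refine intervalIntegral.integral_mono_interval (by norm_num) (by norm_num) (by linarith)
        (ae_of_all _ (hnn z)) (hintv z (by linarith))
    have h2 : ∫ _ in (5/16:ℝ)..(7/16), m * m ≤
        ∫ y in (5/16:ℝ)..(7/16), PhiLSW (z - y) * PhiLSW y := by
      refine intervalIntegral.integral_mono_on (by norm_num)
        (continuous_const.intervalIntegrable _ _)
        ((hintv z (by linarith)).mono_set ?_) fun y hy => ?_
      · rw [uIcc_of_le (by norm_num), uIcc_of_le (by linarith)]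
        exact Icc_subset_Icc (by norm_num) (by linarith)
      · exact mul_le_mul (hlb _ (by linarith [hy.2]) (by linarith [hy.1]))
          (hlb _ (by linarith [hy.1]) hy.2) hm0.le (phiLSW_nonneg _)
    rw [intervalIntegral.integral_const, smul_eq_mul] at h2
    linarith
  · unfold conv
    have : ∫ y in (0:ℝ)..z, PhiLSW (z - y) * PhiLSW y = ∫ _ in (0:ℝ)..z, (0:ℝ) := by
      refine intervalIntegral.integral_congr_ae ?_
      -- For `z ≥ 1` one of `z - y`, `y` exceeds `1/2` unless `y = 1/2`.
      have hne : ∀ᵐ y : ℝ, y ≠ 1/2 := by simp [ae_iff]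
      filter_upwards [hne] with y hy _
      rcases lt_or_gt_of_ne hy with h | h
      · rw [phiLSW_eq (z - y), if_neg (by linarith), zero_mul]
      · rw [phiLSW_eq y, if_neg (by linarith), mul_zero]
    rw [this]; simp

/-- Closeness of `h` to `Φ_LSW * Φ_LSW` in `Z`, as pointwise bounds. -/
lemma normZ_pointwise {β₁ β₂ M μ : ℝ} (hβ₂ : 1 < β₂) {h g : ℝ → ℝ}
    (hg : ∀ z, 0 ≤ z → z ≤ 1 → 0 ≤ g z ∧ g z ≤ M) (hg1 : ∀ z, 1 ≤ z → g z = 0)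
    (hh : memZ β₁ β₂ h) (hn : normZ β₁ β₂ (fun z => h z - g z) ≤ μ) :
    (∀ z, 0 ≤ z → z ≤ 1 → |h z - g z| ≤ μ) ∧
      (∀ z, 1 ≤ z → |h z| ≤ μ * Real.exp (-β₁ * z)) := by
  obtain ⟨-, ⟨a, ha⟩, ⟨b, hb⟩⟩ := hh
  have n1 : 0 ≤ normSup (fun z => h z - g z) := by
    apply Real.sSup_nonneg
    rintro _ ⟨z, -, rfl⟩
    exact abs_nonneg _
  have n2 : 0 ≤ normTail β₁ β₂ (fun z => h z - g z) := by
    apply Real.sSup_nonneg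
    rintro _ ⟨z, hz, rfl⟩
    have : (0:ℝ) ≤ z := zero_le_one.trans hz
    simp only
    positivity
  unfold normZ at hn
  refine ⟨fun z hz hz1 => ?_, fun z hz => ?_⟩
  · have : |h z - g z| ≤ normSup (fun z => h z - g z) := by
      refine le_csSup ⟨a + M, ?_⟩ ⟨z, ⟨hz, hz1⟩, rfl⟩
      rintro _ ⟨y, hy, rfl⟩
      have h1 := ha ⟨y, hy, rfl⟩
      have h2 := hg y hy.1 hy.2
      simp only at h1 ⊢
      calc |h y - g y| ≤ |h y| + |g y| := abs_sub _ _
        _ ≤ a + M := by rw [abs_of_nonneg h2.1]; linarith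
    linarith
  · have : |h z - g z| * Real.exp (β₁ * z) * z ^ β₂ ≤ normTail β₁ β₂ (fun z => h z - g z) := by
      refine le_csSup ⟨b, ?_⟩ ⟨z, hz, rfl⟩
      rintro _ ⟨y, hy, rfl⟩
      have h1 := hb ⟨y, hy, rfl⟩
      simp only at h1 ⊢
      rwa [hg1 y hy, sub_zero]
    rw [hg1 z hz, sub_zero] at this
    have hp : 1 ≤ z ^ β₂ := Real.one_le_rpow hz (by linarith)
    have h0 : 0 ≤ |h z| * Real.exp (β₁ * z) := by positivity
    have h3 : |h z| * Real.exp (β₁ * z) ≤ μ := by nlinarith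
    have h4 : Real.exp (-β₁ * z) = (Real.exp (β₁ * z))⁻¹ := by
      rw [← Real.exp_neg]; congr 1; ring
    rw [h4, ← div_eq_mul_inv, le_div_iff₀ (Real.exp_pos _)]
    exact h3

/-! ### Size and Lipschitz bounds for the functionals -/

/-- The majorant for the part of `G_i` over `(1, ∞)`. -/
lemma tail_integrable {β : ℝ} (hβ : 0 < β) :
    IntegrableOn (fun ξ : ℝ => ξ * (1 + ξ) ^ 27 * Real.exp (-β * ξ)) (Ioi 1) := by
  have hc : Continuous fun ξ : ℝ => ξ * (1 + ξ) ^ 27 * Real.exp (-β * ξ) := by fun_prop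
  have hi : IntegrableOn (fun ξ : ℝ => ((Nat.factorial 28 : ℝ) * (2 / β) ^ 28 * Real.exp (β / 2)) *
      Real.exp (-(β / 2) * ξ)) (Ioi 1) :=
    (exp_neg_integrableOn_Ioi 1 (by positivity)).const_mul _
  refine hi.mono' hc.aestronglyMeasurable ?_
  filter_upwards [ae_restrict_mem measurableSet_Ioi] with ξ hξ
  have hξ0 : (0:ℝ) < ξ := zero_lt_one.trans hξ
  have h1 := Real.pow_div_factorial_le_exp (β / 2 * (1 + ξ)) (by positivity) 28
  rw [div_le_iff₀ (by positivity), mul_pow] at h1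
  have h2 : (1 + ξ) ^ 28 ≤ (2 / β) ^ 28 *
      (Real.exp (β / 2 * (1 + ξ)) * (Nat.factorial 28 : ℝ)) := by
    have : (2 / β) ^ 28 * ((β / 2) ^ 28 * (1 + ξ) ^ 28) = (1 + ξ) ^ 28 := by
      rw [← mul_assoc, ← mul_pow]
      have : 2 / β * (β / 2) = 1 := by field_simp
      rw [this]; ring
    rw [← this]
    gcongr
  rw [Real.norm_of_nonneg (by positivity)]
  calc ξ * (1 + ξ) ^ 27 * Real.exp (-β * ξ) ≤ (1 + ξ) ^ 28 * Real.exp (-β * ξ) := by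
        gcongr
        rw [pow_succ' _ 27]
        gcongr; linarith
    _ ≤ (2 / β) ^ 28 * (Real.exp (β / 2 * (1 + ξ)) * (Nat.factorial 28 : ℝ)) *
        Real.exp (-β * ξ) := by gcongr
    _ = ((Nat.factorial 28 : ℝ) * (2 / β) ^ 28) *
        (Real.exp (β / 2 * (1 + ξ)) * Real.exp (-β * ξ)) := by ring
    _ = ((Nat.factorial 28 : ℝ) * (2 / β) ^ 28) *
        (Real.exp (β / 2) * Real.exp (-(β / 2) * ξ)) := by
        rw [← Real.exp_add, ← Real.exp_add]; congr 2; ring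
    _ = _ := by ring

/-- Integrating `ξ h φ` for `φ` of polynomial growth: the part over `(0, 1]` is of the size of
the growth constant, the tail is smaller by the factor `μ`. -/
lemma weighted_integral {β M μ a : ℝ} (hβ : 0 < β) (hM : 0 ≤ M) (hμ : 0 ≤ μ) (ha : 0 ≤ a)
    {h φ : ℝ → ℝ} (hm : Measurable h) (h1 : ∀ z, 0 ≤ z → z ≤ 1 → |h z| ≤ M)
    (h2 : ∀ z, 1 ≤ z → |h z| ≤ μ * Real.exp (-β * z)) (hφ : Continuous φ)
    (hb : ∀ z, 0 ≤ z → |φ z| ≤ a * (1 + z) ^ 27) :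
    IntegrableOn (fun ξ => ξ * h ξ * φ ξ) (Ioc 0 1) ∧
    IntegrableOn (fun ξ => ξ * h ξ * φ ξ) (Ioi 1) ∧
    |∫ ξ in Ioc (0:ℝ) 1, ξ * h ξ * φ ξ| ≤ M * (a * 2 ^ 27) ∧
    |∫ ξ in Ioi (1:ℝ), ξ * h ξ * φ ξ| ≤
      μ * a * ∫ ξ in Ioi (1:ℝ), ξ * (1 + ξ) ^ 27 * Real.exp (-β * ξ) := by
  have hmeas : Measurable fun ξ => ξ * h ξ * φ ξ := (measurable_id.mul hm).mul hφ.measurable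
  have b1 : ∀ ξ ∈ Ioc (0:ℝ) 1, ‖ξ * h ξ * φ ξ‖ ≤ M * (a * 2 ^ 27) := by
    intro ξ hξ
    rw [Real.norm_eq_abs, abs_mul, abs_mul, abs_of_pos hξ.1]
    have e1 : ξ * |h ξ| ≤ 1 * M :=
      mul_le_mul hξ.2 (h1 ξ hξ.1.le hξ.2) (abs_nonneg _) zero_le_one
    have e2 : |φ ξ| ≤ a * 2 ^ 27 := (hb ξ hξ.1.le).trans (by
      have := hξ.1
      gcongr; linarith [hξ.2])
    rw [one_mul] at e1
    exact mul_le_mul e1 e2 (abs_nonneg _) hM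
  have b2 : ∀ ξ ∈ Ioi (1:ℝ), ‖ξ * h ξ * φ ξ‖ ≤
      μ * a * (ξ * (1 + ξ) ^ 27 * Real.exp (-β * ξ)) := by
    intro ξ hξ
    have h0 : (0:ℝ) < ξ := zero_lt_one.trans hξ
    rw [Real.norm_eq_abs, abs_mul, abs_mul, abs_of_pos h0]
    calc ξ * |h ξ| * |φ ξ| ≤ ξ * (μ * Real.exp (-β * ξ)) * (a * (1 + ξ) ^ 27) := by
          gcongr
          · exact h2 ξ (le_of_lt hξ)
          · exact hb ξ h0.le
      _ = _ := by ring
  have b1' : ∀ᵐ ξ ∂(volume.restrict (Ioc (0:ℝ) 1)), ‖ξ * h ξ * φ ξ‖ ≤ M * (a * 2 ^ 27) := by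
    filter_upwards [ae_restrict_mem measurableSet_Ioc] with ξ hξ using b1 ξ hξ
  have b2' : ∀ᵐ ξ ∂(volume.restrict (Ioi (1:ℝ))), ‖ξ * h ξ * φ ξ‖ ≤
      μ * a * (ξ * (1 + ξ) ^ 27 * Real.exp (-β * ξ)) := by
    filter_upwards [ae_restrict_mem measurableSet_Ioi] with ξ hξ using b2 ξ hξ
  have ti := (tail_integrable hβ).const_mul (μ * a)
  refine ⟨Measure.integrableOn_of_bounded (by simp) hmeas.aestronglyMeasurable b1',
    ti.mono' hmeas.aestronglyMeasurable b2', ?_, ?_⟩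
  · have := norm_setIntegral_le_of_norm_le_const (μ := volume) (by simp) b1
    simpa using this
  · have := norm_integral_le_of_norm_le ti b2'
    rwa [integral_const_mul, Real.norm_eq_abs] at this

/-- All quantitative information on `G_i` and `Ĝ_i`, in units of `A = exp P_δ(5/8)`: `Ĝ_i` is
comparable to `A`, `G_i` is within relative error `η` of it, and is Lipschitz in `(ε, ε̃)` with
constant of order `A / √δ`. -/
lemma G_bounds {β M c₀ η : ℝ} (hβ : 0 < β) (hM : 0 < M) (hc₀ : 0 < c₀) (hη : 0 < η) :
    ∃ σ μ k K L : ℝ, 0 < σ ∧ 0 < μ ∧ 0 < k ∧ 0 < K ∧ 0 < L ∧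
    ∀ δ, 0 < δ → δ ≤ 1/64 → ∀ h g : ℝ → ℝ, Measurable h →
    (∀ z, 0 ≤ z → z ≤ 1 → 0 ≤ g z ∧ g z ≤ M) → (∀ z, 5/8 ≤ z → z ≤ 3/4 → c₀ ≤ g z) →
    (∀ z, 0 ≤ z → z ≤ 1 → |h z - g z| ≤ μ) → (∀ z, 1 ≤ z → |h z| ≤ μ * Real.exp (-β * z)) →
    ∀ i : ℕ, Real.exp (PP δ (5/8)) * k ≤ Ghat i δ h ∧ Ghat i δ h ≤ Real.exp (PP δ (5/8)) * K ∧
    (∀ ε εt, 0 ≤ ε → ε ≤ σ * √δ → 0 ≤ εt → εt ≤ σ * √δ →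
      |Gfull i δ ε εt h - Ghat i δ h| ≤ η * Ghat i δ h) ∧
    (∀ ε εt ε' εt' d, 0 ≤ ε → 0 ≤ εt → 0 ≤ ε' → 0 ≤ εt' → |ε - ε'| ≤ d → |εt - εt'| ≤ d →
      |Gfull i δ ε εt h - Gfull i δ ε' εt' h| ≤ d * (L / √δ) * Real.exp (PP δ (5/8))) := by
  obtain ⟨W, hW⟩ : ∃ W, W = ∫ ξ in Ioi (1:ℝ), ξ * (1 + ξ) ^ 27 * Real.exp (-β * ξ) := ⟨_, rfl⟩
  have hW0 : 0 ≤ W := by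
    rw [hW]
    refine setIntegral_nonneg measurableSet_Ioi fun ξ hξ => ?_
    have h0 : (0:ℝ) < ξ := zero_lt_one.trans hξ
    positivity
  obtain ⟨E, hE⟩ : ∃ E, E = Real.exp 480 := ⟨_, rfl⟩
  have hE0 : 0 < E := by rw [hE]; positivity
  obtain ⟨j, hj⟩ : ∃ j, j = Real.exp (-80) / 192 := ⟨_, rfl⟩
  have hj0 : 0 < j := by rw [hj]; positivity
  obtain ⟨Y, hY⟩ : ∃ Y : ℝ, Y = 2 ^ 27 := ⟨_, rfl⟩
  have hY0 : 0 < Y := by rw [hY]; positivity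
  -- `σ` keeps the exponent change below `η k / 2` on `(0, 1]`; the last two terms of `μ` bound the
  -- negative part of `Ĝ_i` and the tail of `G_i`.
  set k := c₀ * j / 64 with hk
  have hk0 : 0 < k := by positivity
  set σ := η * k / (2 * (210 * E * Y * (M + 1))) with hσ
  set μ := min (min 1 (c₀ / 2)) (min (k / (2 * (E * Y))) (η * k / (2 * (E * (W + 1))))) with hμ
  have hσ0 : 0 < σ := by positivity
  have hμ0 : 0 < μ := by
    refine lt_min (lt_min one_pos (by positivity)) (lt_min (by positivity) (by positivity))
  have hμ1 : μ ≤ 1 := (min_le_left _ _).trans (min_le_left _ _)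
  have hμ2 : μ ≤ c₀ / 2 := (min_le_left _ _).trans (min_le_right _ _)
  have hμ3 : μ * (E * Y) ≤ k / 2 := by
    have : μ ≤ k / (2 * (E * Y)) := (min_le_right _ _).trans (min_le_left _ _)
    rw [le_div_iff₀ (by positivity)] at this
    linarith
  have hμ4 : μ * (E * (W + 1)) ≤ η * k / 2 := by
    have : μ ≤ η * k / (2 * (E * (W + 1))) := (min_le_right _ _).trans (min_le_right _ _)
    rw [le_div_iff₀ (by positivity)] at this
    linarith
  have hσ1 : σ * (210 * E * Y * (M + 1)) = η * k / 2 := by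
    rw [hσ]; field_simp
  refine ⟨σ, μ, k, (M + 1) * (E * Y), 210 * E * ((M + 1) * Y + W), hσ0, hμ0, hk0,
    by positivity, by positivity, ?_⟩
  intro δ hδ hδ64 h g hm hg hgl hhg htail i
  have hδ1 : δ ≤ 1 := by linarith
  have hr : 0 < √δ := Real.sqrt_pos.2 hδ
  obtain ⟨A, hA⟩ : ∃ A, A = Real.exp (PP δ (5/8)) := ⟨_, rfl⟩
  have hA0 : 0 < A := by rw [hA]; positivity
  rw [← hA]
  have hh1 : ∀ z, 0 ≤ z → z ≤ 1 → |h z| ≤ M + 1 := by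
    intro z hz hz1
    have a1 := abs_le.1 (hhg z hz hz1)
    have a2 := hg z hz hz1
    rw [abs_le]
    constructor <;> linarith [a1.1, a1.2, a2.1, a2.2]
  have hf26 : ∀ z, 0 ≤ z → FF i δ 0 0 z ≤ A * E * (1 + z) ^ 26 := by
    intro z hz; rw [hA, hE]; exact FF_zero_le i hδ hδ1 hz
  have hFb : ∀ ε εt, 0 ≤ ε → 0 ≤ εt → ∀ z, 0 ≤ z →
      |FF i δ ε εt z| ≤ A * E * (1 + z) ^ 27 := by
    intro ε εt hε hεt z hz
    rw [abs_of_nonneg (FF_nonneg i hδ ε εt hz)]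
    refine (FF_le i hδ hε hεt hz).trans ((hf26 z hz).trans ?_)
    gcongr <;> linarith
  have hDb : ∀ ε εt ε' εt' d, 0 ≤ ε → 0 ≤ εt → 0 ≤ ε' → 0 ≤ εt' → |ε - ε'| ≤ d →
      |εt - εt'| ≤ d → ∀ z, 0 ≤ z →
      |FF i δ ε εt z - FF i δ ε' εt' z| ≤ d * (210 / √δ) * (A * E) * (1 + z) ^ 27 := by
    intro ε εt ε' εt' d h1 h2 h3 h4 h5 h6 z hz
    have hd : 0 ≤ d := (abs_nonneg _).trans h5
    calc _ ≤ d * (PP δ z + SS δ z) * FF i δ 0 0 z := FF_lip i hδ h1 h2 h3 h4 h5 h6 hz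
      _ ≤ d * (210 / √δ * (1 + z)) * (A * E * (1 + z) ^ 26) := by
          have := FF_nonneg i hδ 0 0 hz
          gcongr
          · exact PS_le hδ hδ1 hz
          · exact hf26 z hz
      _ = _ := by ring
  have hI := fun ε εt (h1 : 0 ≤ ε) (h2 : 0 ≤ εt) =>
    weighted_integral hβ (by linarith : 0 ≤ M + 1) hμ0.le (by positivity) hm hh1 htail
      (FF_cont i hδ ε εt) (hFb ε εt h1 h2)
  have hsplit : ∀ ε εt, 0 ≤ ε → 0 ≤ εt → Gfull i δ ε εt h =
      (∫ ξ in Ioc (0:ℝ) 1, ξ * h ξ * FF i δ ε εt ξ) +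
        ∫ ξ in Ioi (1:ℝ), ξ * h ξ * FF i δ ε εt ξ := by
    intro ε εt h1 h2
    obtain ⟨i1, i2, -, -⟩ := hI ε εt h1 h2
    rw [Gfull_eq i hδ, ← Ioc_union_Ioi_eq_Ioi (zero_le_one (α := ℝ)),
      setIntegral_union (Ioc_disjoint_Ioi le_rfl) measurableSet_Ioi i1 i2]
  have hlow : A * k ≤ Ghat i δ h := by
    have i1 := (hI 0 0 le_rfl le_rfl).1
    have ii : IntervalIntegrable (fun ξ => ξ * h ξ * FF i δ 0 0 ξ) volume 0 1 :=
      (intervalIntegrable_iff_integrableOn_Ioc_of_le zero_le_one).2 i1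
    have sub : ∀ a b : ℝ, 0 ≤ a → a ≤ b → b ≤ 1 →
        IntervalIntegrable (fun ξ => ξ * h ξ * FF i δ 0 0 ξ) volume a b := by
      intro a b ha hab hb
      refine ii.mono_set ?_
      rw [uIcc_of_le hab, uIcc_of_le zero_le_one]
      exact Icc_subset_Icc ha hb
    -- `h` may be negative, but only by `μ`, off the interval `[5/8, 3/4]` that produces the lower bound.
    have low1 : ∀ ξ, 0 ≤ ξ → ξ ≤ 1 → -(μ * (A * E * Y)) ≤ ξ * h ξ * FF i δ 0 0 ξ := by
      intro ξ h0 h1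
      have a1 := (abs_le.1 (hhg ξ h0 h1)).1
      have a2 := (hg ξ h0 h1).1
      have a3 : -μ ≤ h ξ := by linarith
      have a4 := FF_nonneg i hδ 0 0 h0
      have a5 : FF i δ 0 0 ξ ≤ A * E * Y := by
        refine (le_abs_self _).trans ((hFb 0 0 le_rfl le_rfl ξ h0).trans ?_)
        rw [hY]; gcongr; linarith
      have a6 : -μ ≤ ξ * h ξ := by nlinarith
      calc -(μ * (A * E * Y)) ≤ -μ * FF i δ 0 0 ξ := by nlinarith
        _ ≤ _ := mul_le_mul_of_nonneg_right a6 a4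
    have low2 : ∀ ξ, 5/8 ≤ ξ → ξ ≤ 3/4 → 5/8 * (c₀ / 2) * (A * j) ≤ ξ * h ξ * FF i δ 0 0 ξ := by
      intro ξ h0 h1
      have a1 := (abs_le.1 (hhg ξ (by linarith) (by linarith))).1
      have a2 := hgl ξ h0 h1
      have a3 : c₀ / 2 ≤ h ξ := by linarith
      have a4 : A * j ≤ FF i δ 0 0 ξ := by rw [hA, hj]; exact le_FF_zero i hδ hδ1 h0
      have : 0 ≤ A * j := by positivity
      have : 0 ≤ h ξ := by linarith
      gcongr
    have e1 : Ghat i δ h = (∫ ξ in (0:ℝ)..(5/8), ξ * h ξ * FF i δ 0 0 ξ) +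
        (∫ ξ in (5/8:ℝ)..(3/4), ξ * h ξ * FF i δ 0 0 ξ) +
        ∫ ξ in (3/4:ℝ)..1, ξ * h ξ * FF i δ 0 0 ξ := by
      rw [intervalIntegral.integral_add_adjacent_intervals
          (sub _ _ (by norm_num) (by norm_num) (by norm_num))
          (sub _ _ (by norm_num) (by norm_num) (by norm_num)),
        intervalIntegral.integral_add_adjacent_intervals
          (sub _ _ (by norm_num) (by norm_num) (by norm_num))
          (sub _ _ (by norm_num) (by norm_num) (by norm_num)),
        Ghat_eq i hδ, intervalIntegral.integral_of_le zero_le_one]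
    have lb : ∀ a b c : ℝ, 0 ≤ a → a ≤ b → b ≤ 1 →
        (∀ ξ, a ≤ ξ → ξ ≤ b → c ≤ ξ * h ξ * FF i δ 0 0 ξ) →
        (b - a) * c ≤ ∫ ξ in a..b, ξ * h ξ * FF i δ 0 0 ξ := by
      intro a b c ha hab hb hc
      have := intervalIntegral.integral_mono_on hab
        (continuous_const.intervalIntegrable (μ := volume) a b) (sub a b ha hab hb)
        (fun ξ hξ => hc ξ hξ.1 hξ.2)
      simpa using this
    have p1 := lb 0 (5/8) _ le_rfl (by norm_num) (by norm_num)
      (fun ξ h0 h1 => low1 ξ h0 (by linarith))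
    have p2 := lb (5/8) (3/4) _ (by norm_num) (by norm_num) (by norm_num) low2
    have p3 := lb (3/4) 1 _ (by norm_num) (by norm_num) le_rfl
      (fun ξ h0 h1 => low1 ξ (by linarith) h1)
    have q : μ * (A * E * Y) ≤ A * (k / 2) := by
      calc μ * (A * E * Y) = A * (μ * (E * Y)) := by ring
        _ ≤ _ := by gcongr
    have q2 : 5/8 * (c₀ / 2) * (A * j) = 20 * (A * k) := by rw [hk]; ring
    have q3 : 0 < A * k := by positivity
    rw [e1]
    nlinarith
  refine ⟨hlow, ?_, ?_, ?_⟩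
  · have := (hI 0 0 le_rfl le_rfl).2.2.1
    rw [← Ghat_eq i hδ, ← hY] at this
    refine (le_abs_self _).trans (this.trans (le_of_eq ?_))
    ring
  · intro ε εt h1 h2 h3 h4
    obtain ⟨i1, -, -, t1⟩ := hI ε εt h1 h3
    have i0 := (hI 0 0 le_rfl le_rfl).1
    obtain ⟨-, -, d1, -⟩ := weighted_integral hβ (by linarith : 0 ≤ M + 1) hμ0.le (by positivity)
      hm hh1 htail ((FF_cont i hδ ε εt).sub (FF_cont i hδ 0 0))
      (hDb ε εt 0 0 (σ * √δ) h1 h3 le_rfl le_rfl (by rwa [sub_zero, abs_of_nonneg h1])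
        (by rwa [sub_zero, abs_of_nonneg h3]))
    -- `Ĝ_i` lives on `(0, 1]`, so only there is the difference of the two `F_i` taken.
    have e : Gfull i δ ε εt h - Ghat i δ h =
        (∫ ξ in Ioc (0:ℝ) 1, ξ * h ξ * (FF i δ ε εt ξ - FF i δ 0 0 ξ)) +
          ∫ ξ in Ioi (1:ℝ), ξ * h ξ * FF i δ ε εt ξ := by
      rw [hsplit ε εt h1 h3, Ghat_eq i hδ]
      simp only [mul_sub]
      rw [integral_sub i1 i0]; ring
    rw [e]
    refine (abs_add_le _ _).trans ?_
    have d2 : (M + 1) * (σ * √δ * (210 / √δ) * (A * E) * 2 ^ 27) = A * (η * k / 2) := by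
      rw [← hσ1, ← hY]; field_simp
    have t2 : μ * (A * E) * W ≤ A * (η * k / 2) := by
      calc μ * (A * E) * W ≤ μ * (A * E) * (W + 1) := by gcongr; linarith
        _ = A * (μ * (E * (W + 1))) := by ring
        _ ≤ _ := by gcongr
    rw [← hW] at t1
    have d3 := d1.trans d2.le
    have t3 := t1.trans t2
    have : A * (η * k / 2) + A * (η * k / 2) = η * (A * k) := by ring
    calc _ ≤ A * (η * k / 2) + A * (η * k / 2) := add_le_add d3 t3
      _ = η * (A * k) := this
      _ ≤ _ := by gcongr
  · intro ε εt ε' εt' d h1 h2 h3 h4 h5 h6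
    have hd : 0 ≤ d := (abs_nonneg _).trans h5
    obtain ⟨i1, i2, -, -⟩ := hI ε εt h1 h2
    obtain ⟨i1', i2', -, -⟩ := hI ε' εt' h3 h4
    obtain ⟨-, -, d1, t1⟩ := weighted_integral hβ (by linarith : 0 ≤ M + 1) hμ0.le (by positivity)
      hm hh1 htail ((FF_cont i hδ ε εt).sub (FF_cont i hδ ε' εt'))
      (hDb ε εt ε' εt' d h1 h2 h3 h4 h5 h6)
    have e : Gfull i δ ε εt h - Gfull i δ ε' εt' h =
        (∫ ξ in Ioc (0:ℝ) 1, ξ * h ξ * (FF i δ ε εt ξ - FF i δ ε' εt' ξ)) +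
          ∫ ξ in Ioi (1:ℝ), ξ * h ξ * (FF i δ ε εt ξ - FF i δ ε' εt' ξ) := by
      rw [hsplit ε εt h1 h2, hsplit ε' εt' h3 h4]
      simp only [mul_sub]
      rw [integral_sub i1 i1', integral_sub i2 i2']; ring
    rw [e]
    refine (abs_add_le _ _).trans ((add_le_add d1 t1).trans ?_)
    rw [← hW, ← hY]
    calc (M + 1) * (d * (210 / √δ) * (A * E) * Y) + μ * (d * (210 / √δ) * (A * E)) * W
        ≤ (M + 1) * (d * (210 / √δ) * (A * E) * Y) + 1 * (d * (210 / √δ) * (A * E)) * W := by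
          gcongr
      _ = _ := by ring

/-! ### The compatibility equations -/

/-- For positive `G₁, G₂` the compatibility equations are the fixed point equation of
`(ε, ε̃) ↦ (1 / G₁, G₂ / G₁ ^ 2)`. -/
lemma compat_iff {x y a b : ℝ} (hx : 0 < x) (ha : 0 < a) :
    (x = x ^ 2 * a ∧ y = x ^ 2 * b) ↔ (1 / a = x ∧ b / a ^ 2 = y) := by
  constructor
  · rintro ⟨h1, h2⟩
    have h3 : x * a = 1 := by
      have : x * (x * a - 1) = 0 := by linear_combination -h1
      rcases mul_eq_zero.1 this with h | h
      · exact absurd h hx.ne'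
      · linarith
    have h4 : 1 / a = x := by rw [div_eq_iff ha.ne', h3]
    refine ⟨h4, ?_⟩
    rw [h2, ← h4]; field_simp
  · rintro ⟨h1, h2⟩
    constructor
    · rw [← h1]; field_simp
    · rw [← h2, ← h1]; field_simp

/-- Existence and uniqueness for the compatibility equations by the contraction principle on
the box `[0, r] ^ 2`, given two-sided and Lipschitz bounds for `G₁, G₂` in units of `A`. -/
lemma fixed_point_system {G₁ G₂ : ℝ → ℝ → ℝ} {A r k K Λ : ℝ} (hA : 0 < A)
    (hk : 0 < k) (hK : 0 < K) (hΛ : 0 < Λ)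
    (b₁ : ∀ x y, 0 ≤ x → x ≤ r → 0 ≤ y → y ≤ r → A * k ≤ G₁ x y ∧ G₁ x y ≤ A * K)
    (b₂ : ∀ x y, 0 ≤ x → x ≤ r → 0 ≤ y → y ≤ r → A * k ≤ G₂ x y ∧ G₂ x y ≤ A * K)
    (l₁ : ∀ x y x' y' d, 0 ≤ x → 0 ≤ y → 0 ≤ x' → 0 ≤ y' → |x - x'| ≤ d → |y - y'| ≤ d →
      |G₁ x y - G₁ x' y'| ≤ d * Λ * A)
    (l₂ : ∀ x y x' y' d, 0 ≤ x → 0 ≤ y → 0 ≤ x' → 0 ≤ y' → |x - x'| ≤ d → |y - y'| ≤ d →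
      |G₂ x y - G₂ x' y'| ≤ d * Λ * A)
    (c₁ : 1 / (A * k) ≤ r) (c₂ : K / (A * k ^ 2) ≤ r)
    (c₃ : Λ / A * (1 / k ^ 2 + 2 * K ^ 2 / k ^ 4) ≤ 1/2) :
    ∃! p : ℝ × ℝ, 0 < p.1 ∧ p.1 ≤ r ∧ 0 < p.2 ∧ p.2 ≤ r ∧
      p.1 = p.1 ^ 2 * G₁ p.1 p.2 ∧ p.2 = p.1 ^ 2 * G₂ p.1 p.2 := by
  have hAk : 0 < A * k := by positivity
  have hr : 0 < r := lt_of_lt_of_le (by positivity) c₁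
  set s : Set (ℝ × ℝ) := Icc 0 r ×ˢ Icc 0 r with hs
  set T : ℝ × ℝ → ℝ × ℝ := fun p => (1 / G₁ p.1 p.2, G₂ p.1 p.2 / G₁ p.1 p.2 ^ 2) with hT
  have hpos : ∀ p ∈ s, 0 < (T p).1 ∧ (T p).1 ≤ r ∧ 0 < (T p).2 ∧ (T p).2 ≤ r := by
    rintro ⟨x, y⟩ ⟨⟨hx0, hx1⟩, hy0, hy1⟩
    obtain ⟨p1, p2⟩ := b₁ x y hx0 hx1 hy0 hy1
    obtain ⟨q1, q2⟩ := b₂ x y hx0 hx1 hy0 hy1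
    have g1 : 0 < G₁ x y := hAk.trans_le p1
    have g2 : 0 < G₂ x y := hAk.trans_le q1
    refine ⟨by positivity, ?_, by positivity, ?_⟩
    · exact (one_div_le_one_div_of_le hAk p1).trans c₁
    · calc G₂ x y / G₁ x y ^ 2 ≤ A * K / (A * k) ^ 2 := by gcongr
        _ = K / (A * k ^ 2) := by field_simp
        _ ≤ r := c₂
  have hmaps : MapsTo T s s := by
    intro p hp
    obtain ⟨h1, h2, h3, h4⟩ := hpos p hp
    exact ⟨⟨h1.le, h2⟩, h3.le, h4⟩
  have hdist : ∀ p ∈ s, ∀ q ∈ s, dist (T p) (T q) ≤ 1/2 * dist p q := by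
    rintro ⟨x, y⟩ ⟨⟨hx0, hx1⟩, hy0, hy1⟩ ⟨x', y'⟩ ⟨⟨hx0', hx1'⟩, hy0', hy1'⟩
    obtain ⟨p1, p2⟩ := b₁ x y hx0 hx1 hy0 hy1
    obtain ⟨p1', p2'⟩ := b₁ x' y' hx0' hx1' hy0' hy1'
    obtain ⟨q1', q2'⟩ := b₂ x' y' hx0' hx1' hy0' hy1'
    set d := dist (x, y) (x', y') with hd
    have hd0 : 0 ≤ d := dist_nonneg
    have d1 : |x - x'| ≤ d := by rw [hd, Prod.dist_eq, ← Real.dist_eq]; exact le_max_left _ _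
    have d2 : |y - y'| ≤ d := by rw [hd, Prod.dist_eq, ← Real.dist_eq]; exact le_max_right _ _
    have e1 := l₁ x y x' y' d hx0 hy0 hx0' hy0' d1 d2
    have e2 := l₂ x y x' y' d hx0 hy0 hx0' hy0' d1 d2
    have g1 : 0 < G₁ x y := hAk.trans_le p1
    have g1' : 0 < G₁ x' y' := hAk.trans_le p1'
    have g2' : 0 < G₂ x' y' := hAk.trans_le q1'
    have hfin : d * (Λ / A * (1 / k ^ 2 + 2 * K ^ 2 / k ^ 4)) ≤ 1/2 * d := by
      rw [mul_comm (1/2 : ℝ)]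
      exact mul_le_mul_of_nonneg_left c₃ hd0
    rw [Prod.dist_eq]
    simp only [hT, Real.dist_eq]
    refine max_le ?_ ?_
    · have e : 1 / G₁ x y - 1 / G₁ x' y' = -(G₁ x y - G₁ x' y') / (G₁ x y * G₁ x' y') := by
        field_simp; ring
      rw [e, abs_div, abs_neg, abs_of_pos (mul_pos g1 g1')]
      calc |G₁ x y - G₁ x' y'| / (G₁ x y * G₁ x' y') ≤ d * Λ * A / (A * k * (A * k)) := by gcongr
        _ = d * (Λ / A * (1 / k ^ 2)) := by field_simp
        _ ≤ d * (Λ / A * (1 / k ^ 2 + 2 * K ^ 2 / k ^ 4)) := by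
            gcongr
            have : 0 ≤ 2 * K ^ 2 / k ^ 4 := by positivity
            linarith
        _ ≤ _ := hfin
    · have e : G₂ x y / G₁ x y ^ 2 - G₂ x' y' / G₁ x' y' ^ 2 =
          (G₂ x y - G₂ x' y') / G₁ x y ^ 2 + -(G₂ x' y' * (G₁ x y + G₁ x' y') *
            (G₁ x y - G₁ x' y')) / (G₁ x y ^ 2 * G₁ x' y' ^ 2) := by
        field_simp; ring
      rw [e]
      refine (abs_add_le _ _).trans ?_
      rw [abs_div, abs_div, abs_neg, abs_mul, abs_of_pos (by positivity : 0 < G₁ x y ^ 2),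
        abs_of_pos (by positivity : 0 < G₁ x y ^ 2 * G₁ x' y' ^ 2),
        abs_of_pos (by positivity : 0 < G₂ x' y' * (G₁ x y + G₁ x' y'))]
      calc |G₂ x y - G₂ x' y'| / G₁ x y ^ 2 + G₂ x' y' * (G₁ x y + G₁ x' y') *
            |G₁ x y - G₁ x' y'| / (G₁ x y ^ 2 * G₁ x' y' ^ 2)
          ≤ d * Λ * A / (A * k) ^ 2 + A * K * (A * K + A * K) * (d * Λ * A) /
            ((A * k) ^ 2 * (A * k) ^ 2) := by gcongr
        _ = d * (Λ / A * (1 / k ^ 2 + 2 * K ^ 2 / k ^ 4)) := by field_simp; ring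
        _ ≤ _ := hfin
  have hiff : ∀ p : ℝ × ℝ, p ∈ s → 0 < p.1 →
      ((p.1 = p.1 ^ 2 * G₁ p.1 p.2 ∧ p.2 = p.1 ^ 2 * G₂ p.1 p.2) ↔ T p = p) := by
    rintro ⟨x, y⟩ ⟨⟨hx0, hx1⟩, hy0, hy1⟩ hx
    rw [Prod.ext_iff]
    exact compat_iff hx (hAk.trans_le (b₁ x y hx0 hx1 hy0 hy1).1)
  have hcontr : ContractingWith (1/2 : NNReal) (hmaps.restrict T s s) := by
    refine ⟨by rw [← NNReal.coe_lt_coe]; norm_num, LipschitzWith.of_dist_le_mul ?_⟩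
    rintro ⟨p, hp⟩ ⟨q, hq⟩
    have := hdist p hp q hq
    simpa [Subtype.dist_eq] using this
  have hcomp : IsComplete s := (isClosed_Icc.prod isClosed_Icc).isComplete
  have h0 : ((0, 0) : ℝ × ℝ) ∈ s := ⟨⟨le_rfl, hr.le⟩, le_rfl, hr.le⟩
  obtain ⟨p, hps, hpT, -⟩ := hcontr.exists_fixedPoint' hcomp hmaps h0 (edist_ne_top _ _)
  have hpT' : T p = p := hpT
  have hp := hpos p hps
  rw [hpT'] at hp
  obtain ⟨u1, u2, u3, u4⟩ := hp
  obtain ⟨v1, v2⟩ := (hiff p hps u1).2 hpT'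
  refine ⟨p, ⟨u1, u2, u3, u4, v1, v2⟩, ?_⟩
  rintro q ⟨w1, w2, w3, w4, w5, w6⟩
  have hqs : q ∈ s := ⟨⟨w1.le, w2⟩, w3.le, w4⟩
  have hq := (hiff q hqs w1).1 ⟨w5, w6⟩
  have hfin := hdist q hqs p hps
  rw [hq, hpT'] at hfin
  have : dist q p ≤ 0 := by linarith [dist_nonneg (x := q) (y := p)]
  exact dist_le_zero.1 this

/-- Relative errors `η` in `G₁ ≈ Ĝ₁` and `G₂ ≈ Ĝ₂` turn into a factor `α ≥ 1 + 8 η` for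
`1 / G₁` and `G₂ / G₁ ^ 2`. -/
lemma localization_bounds {α η a b p q : ℝ} (hη0 : 0 < η) (hη1 : η ≤ 1/8) (hη2 : 1 + 8 * η ≤ α)
    (hp : 0 < p) (hq : 0 < q) (a1 : (1 - η) * p ≤ a) (a2 : a ≤ (1 + η) * p)
    (b1 : (1 - η) * q ≤ b) (b2 : b ≤ (1 + η) * q) :
    (1 / p) / α ≤ 1 / a ∧ 1 / a ≤ α * (1 / p) ∧
      (q / p ^ 2) / α ≤ b / a ^ 2 ∧ b / a ^ 2 ≤ α * (q / p ^ 2) := by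
  have r1 : 0 < 1 - η := by linarith
  have hα0 : 0 < α := by linarith
  have hη3 : η ^ 2 ≤ η / 8 := by nlinarith
  have x1 : 1 + η ≤ α * (1 - η) ^ 2 := by
    calc 1 + η ≤ (1 + 8 * η) * (1 - η) ^ 2 := by nlinarith [pow_pos hη0 3]
      _ ≤ _ := by gcongr
  have x2 : (1 + η) ^ 2 ≤ α * (1 - η) := by
    calc (1 + η) ^ 2 ≤ (1 + 8 * η) * (1 - η) := by nlinarith
      _ ≤ _ := by gcongr
  have x3 : 1 + η ≤ α := by linarith
  have x4 : 1 ≤ α * (1 - η) := by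
    calc 1 ≤ (1 + η) ^ 2 := by nlinarith
      _ ≤ _ := x2
  have hp1 : 0 < (1 - η) * p := by positivity
  have hq1 : 0 < (1 - η) * q := by positivity
  have ha : 0 < a := hp1.trans_le a1
  have hb0 : 0 < b := hq1.trans_le b1
  refine ⟨?_, ?_, ?_, ?_⟩
  · rw [div_div]
    refine one_div_le_one_div_of_le ha ?_
    calc a ≤ (1 + η) * p := a2
      _ ≤ α * p := by gcongr
      _ = p * α := mul_comm _ _
  · rw [mul_one_div, div_le_div_iff₀ ha hp]
    calc 1 * p ≤ α * (1 - η) * p := by gcongr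
      _ = α * ((1 - η) * p) := by ring
      _ ≤ α * a := by gcongr
  · calc q / p ^ 2 / α = q / (p ^ 2 * α) := by rw [div_div]
      _ ≤ ((1 - η) * q) / ((1 + η) * p) ^ 2 := by
          rw [div_le_div_iff₀ (by positivity) (by positivity)]
          calc q * ((1 + η) * p) ^ 2 = (q * p ^ 2) * (1 + η) ^ 2 := by ring
            _ ≤ (q * p ^ 2) * (α * (1 - η)) := by gcongr
            _ = _ := by ring
      _ ≤ b / a ^ 2 := by gcongr
  · calc b / a ^ 2 ≤ ((1 + η) * q) / ((1 - η) * p) ^ 2 := by gcongr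
      _ ≤ α * q / p ^ 2 := by
          rw [div_le_div_iff₀ (by positivity) (by positivity)]
          calc (1 + η) * q * p ^ 2 = (q * p ^ 2) * (1 + η) := by ring
            _ ≤ (q * p ^ 2) * (α * (1 - η) ^ 2) := by gcongr
            _ = _ := by ring
      _ = _ := by rw [mul_div_assoc]

/-! ### Localization and unique solvability -/

/-- localization and unique solvability of the compatibility equations. -/
theorem stmt18 (β₁ β₂ : ℝ) (hβ₁ : 0 < β₁) (hβ₂ : 1 < β₂) :
    ∀ α : ℝ, 1 < α → ∃ δ₀ σ μ : ℝ, 0 < δ₀ ∧ 0 < σ ∧ 0 < μ ∧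
      ∀ δ ∈ Ioc (0:ℝ) δ₀, ∀ h : ℝ → ℝ, memZ β₁ β₂ h →
        normZ β₁ β₂ (fun z => h z - conv PhiLSW PhiLSW z) ≤ μ →
        (∀ ε εt : ℝ, 0 < ε → ε ≤ σ * Real.sqrt δ → 0 < εt → εt ≤ σ * Real.sqrt δ →
          ε = ε ^ 2 * Gfull 1 δ ε εt h → εt = ε ^ 2 * Gfull 2 δ ε εt h →
          (1 / Ghat 1 δ h) / α ≤ ε ∧ ε ≤ α * (1 / Ghat 1 δ h) ∧
          (Ghat 2 δ h / (Ghat 1 δ h) ^ 2) / α ≤ εt ∧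
            εt ≤ α * (Ghat 2 δ h / (Ghat 1 δ h) ^ 2)) ∧
        (∃! p : ℝ × ℝ, 0 < p.1 ∧ p.1 ≤ σ * Real.sqrt δ ∧ 0 < p.2 ∧ p.2 ≤ σ * Real.sqrt δ ∧
          p.1 = p.1 ^ 2 * Gfull 1 δ p.1 p.2 h ∧
          p.2 = p.1 ^ 2 * Gfull 2 δ p.1 p.2 h) := by
  intro α hα
  obtain ⟨M, c₀, hM, hc₀, hconv, hconvl, hconv1⟩ := conv_facts
  obtain ⟨η, hη⟩ : ∃ η, η = min (1/8) ((α - 1) / 8) := ⟨_, rfl⟩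
  have hη0 : 0 < η := by rw [hη]; exact lt_min (by norm_num) (by linarith)
  have hη1 : η ≤ 1/8 := by rw [hη]; exact min_le_left _ _
  have hη2 : 1 + 8 * η ≤ α := by
    have : η ≤ (α - 1) / 8 := by rw [hη]; exact min_le_right _ _
    linarith
  obtain ⟨σ, μ, k, K, L, hσ, hμ, hk, hK, hL, hG⟩ := G_bounds hβ₁ hM hc₀ hη0
  -- `t` bounds `√δ`; since `1 / A ≤ 338 δ`, it makes the fixed point map a contraction of the box.
  obtain ⟨Q, hQ⟩ : ∃ Q, Q = 1 / (k / 2) ^ 2 + 2 * (2 * K) ^ 2 / (k / 2) ^ 4 := ⟨_, rfl⟩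
  have hQ0 : 0 < Q := by rw [hQ]; positivity
  set t := min (min (1/8) (σ * (k / 2) / 338))
    (min (σ * (k / 2) ^ 2 / (338 * (2 * K))) (1 / (2 * (338 * (L * Q))))) with ht
  have ht0 : 0 < t := lt_min (lt_min (by norm_num) (by positivity))
    (lt_min (by positivity) (by positivity))
  have ht1 : t ≤ 1/8 := (min_le_left _ _).trans (min_le_left _ _)
  have ht2 : t * 338 ≤ σ * (k / 2) := by
    have : t ≤ σ * (k / 2) / 338 := (min_le_left _ _).trans (min_le_right _ _)
    linarith
  have ht3 : t * (338 * (2 * K)) ≤ σ * (k / 2) ^ 2 := by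
    have : t ≤ σ * (k / 2) ^ 2 / (338 * (2 * K)) := (min_le_right _ _).trans (min_le_left _ _)
    rwa [le_div_iff₀ (by positivity)] at this
  have ht4 : t * (2 * (338 * (L * Q))) ≤ 1 := by
    have : t ≤ 1 / (2 * (338 * (L * Q))) := (min_le_right _ _).trans (min_le_right _ _)
    rwa [le_div_iff₀ (by positivity)] at this
  refine ⟨t ^ 2, σ, μ, by positivity, hσ, hμ, ?_⟩
  rintro δ ⟨hδ, hδt⟩ h hh hn
  obtain ⟨hp1, hp2⟩ := normZ_pointwise hβ₂ hconv hconv1 hh hn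
  have hδ64 : δ ≤ 1/64 := by nlinarith
  obtain ⟨r, hr⟩ : ∃ r, r = √δ := ⟨_, rfl⟩
  have hr0 : 0 < r := by rw [hr]; exact Real.sqrt_pos.2 hδ
  have hr2 : r ^ 2 = δ := by rw [hr]; exact Real.sq_sqrt hδ.le
  have hrt : r ≤ t := by rw [hr]; exact Real.sqrt_le_iff.2 ⟨ht0.le, hδt⟩
  have hb := hG δ hδ hδ64 h _ hh.1 hconv hconvl hp1 hp2
  have hA : 1 / Real.exp (PP δ (5/8)) ≤ 338 * r ^ 2 := by
    have h1 := le_PP hδ hδ64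
    rw [← hr] at h1
    have h0 : 0 < 1 / (13 * r) := by positivity
    have h2 := Real.quadratic_le_exp_of_nonneg (h0.le.trans h1)
    have h3 : (1 / (13 * r)) ^ 2 ≤ PP δ (5/8) ^ 2 := pow_le_pow_left₀ h0.le h1 2
    have h4 : (1 / (13 * r)) ^ 2 / 2 = 1 / (338 * r ^ 2) := by field_simp; norm_num
    have h5 : 1 / (338 * r ^ 2) ≤ Real.exp (PP δ (5/8)) := by linarith
    calc _ ≤ 1 / (1 / (338 * r ^ 2)) := one_div_le_one_div_of_le (by positivity) h5
      _ = _ := one_div_one_div _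
  rw [← hr]
  rw [← hr] at hb
  obtain ⟨A, hAdef⟩ : ∃ A, A = Real.exp (PP δ (5/8)) := ⟨_, rfl⟩
  have hA0 : 0 < A := by rw [hAdef]; positivity
  rw [← hAdef] at hA hb
  clear_value t
  have hpos : ∀ i, 0 < Ghat i δ h := fun i => lt_of_lt_of_le (by positivity) (hb i).1
  have hrel : ∀ i ε εt, 0 ≤ ε → ε ≤ σ * r → 0 ≤ εt → εt ≤ σ * r →
      (1 - η) * Ghat i δ h ≤ Gfull i δ ε εt h ∧ Gfull i δ ε εt h ≤ (1 + η) * Ghat i δ h := by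
    intro i ε εt h1 h2 h3 h4
    have := abs_le.1 ((hb i).2.2.1 ε εt h1 h2 h3 h4)
    constructor <;> linarith [this.1, this.2]
  have hbd : ∀ i ε εt, 0 ≤ ε → ε ≤ σ * r → 0 ≤ εt → εt ≤ σ * r →
      A * (k / 2) ≤ Gfull i δ ε εt h ∧ Gfull i δ ε εt h ≤ A * (2 * K) := by
    intro i ε εt h1 h2 h3 h4
    obtain ⟨a1, a2⟩ := hrel i ε εt h1 h2 h3 h4
    have a3 := (hb i).1
    have a4 := (hb i).2.1
    have a5 := hpos i
    constructor <;> nlinarith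
  constructor
  · intro ε εt h1 h2 h3 h4 h5 h6
    obtain ⟨a1, a2⟩ := hrel 1 ε εt h1.le h2 h3.le h4
    obtain ⟨b1, b2⟩ := hrel 2 ε εt h1.le h2 h3.le h4
    have g1 : 0 < Gfull 1 δ ε εt h :=
      lt_of_lt_of_le (by positivity) (hbd 1 ε εt h1.le h2 h3.le h4).1
    obtain ⟨e1, e2⟩ := (compat_iff h1 g1).1 ⟨h5, h6⟩
    have key := localization_bounds hη0 hη1 hη2 (hpos 1) (hpos 2) a1 a2 b1 b2
    rw [e1, e2] at key
    exact key
  · refine fixed_point_system (G₁ := fun x y => Gfull 1 δ x y h) (G₂ := fun x y => Gfull 2 δ x y h)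
      (k := k / 2) (K := 2 * K) (Λ := L / r) hA0 (by positivity) (by positivity) (by positivity)
      (hbd 1) (hbd 2) (hb 1).2.2.2 (hb 2).2.2.2 ?_ ?_ ?_
    · calc 1 / (A * (k / 2)) = 1 / A * (1 / (k / 2)) := by field_simp
        _ ≤ 338 * r ^ 2 * (1 / (k / 2)) := by gcongr
        _ = r * (r * 338) / (k / 2) := by ring
        _ ≤ r * (t * 338) / (k / 2) := by gcongr
        _ ≤ r * (σ * (k / 2)) / (k / 2) := by gcongr
        _ = σ * r := by field_simp
    · calc 2 * K / (A * (k / 2) ^ 2) = 1 / A * (2 * K / (k / 2) ^ 2) := by field_simp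
        _ ≤ 338 * r ^ 2 * (2 * K / (k / 2) ^ 2) := by gcongr
        _ = r * (r * (338 * (2 * K))) / (k / 2) ^ 2 := by ring
        _ ≤ r * (t * (338 * (2 * K))) / (k / 2) ^ 2 := by gcongr
        _ ≤ r * (σ * (k / 2) ^ 2) / (k / 2) ^ 2 := by gcongr
        _ = σ * r := by field_simp
    · rw [← hQ]
      calc L / r / A * Q = 1 / A * (L * Q / r) := by field_simp
        _ ≤ 338 * r ^ 2 * (L * Q / r) := by gcongr
        _ = r * (2 * (338 * (L * Q))) / 2 := by field_simp
        _ ≤ t * (2 * (338 * (L * Q))) / 2 := by gcongr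
        _ ≤ 1 / 2 := by linarith
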